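/- Let Δ ⊆ ℝ² be an LDP-polygon and let g_Δ denote its gauge function. Then v(Δ) + v(Δ*) = 12 · Σ_{n ∈ Δ ∩ ℤ²} (1 − g_Δ(n))², where the sum runs over all lattice points of Δ. (Equivalently, writing κ = −g_Δ for the piecewise linear function with value −1 on the boundary of Δ, one has v(Δ) + v(Δ*) = 12 · Σ_{n ∈ Δ ∩ ℤ²} (κ(n) + 1)².) -/

import Mathlib

open MeasureTheory Filter Pointwise

noncomputable section

/-- The canonical embedding of a lattice point of `ℤ^d` into `ℝ^d`. -/
def coeLat {d : ℕ} (n : Fin d → ℤ) : Fin d → ℝ := fun i => (n i : ℝ)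

/-- The set of lattice points lying in a subset `S ⊆ ℝ^d`. -/
def latticePoints {d : ℕ} (S : Set (Fin d → ℝ)) : Set (Fin d → ℤ) :=
  {n | coeLat n ∈ S}

/-- A lattice polytope: the convex hull of finitely many points of `ℤ^d`. -/
def IsLatticePolytope {d : ℕ} (P : Set (Fin d → ℝ)) : Prop :=
  ∃ V : Finset (Fin d → ℤ), P = convexHull ℝ (coeLat '' (V : Set (Fin d → ℤ)))

/-- The dual (polar) body `P* = {y | ⟨y,x⟩ ≥ -1 ∀ x ∈ P}`. -/
def polarDual {d : ℕ} (P : Set (Fin d → ℝ)) : Set (Fin d → ℝ) :=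
  {y | ∀ x ∈ P, -1 ≤ ∑ i, y i * x i}

/-- Dimension of a subset of `ℝ^d`: the dimension of its affine span. -/
def dimSet {d : ℕ} (S : Set (Fin d → ℝ)) : ℕ :=
  Module.finrank ℝ (affineSpan ℝ S).direction

/-- An LDP-polygon: a 2-dimensional lattice polytope in `ℝ²` containing the origin
in its interior, all of whose vertices are primitive lattice vectors. -/
def IsLDP (Δ : Set (Fin 2 → ℝ)) : Prop :=
  IsLatticePolytope Δ ∧ dimSet Δ = 2 ∧ (0 : Fin 2 → ℝ) ∈ interior Δ ∧
    ∀ x ∈ Set.extremePoints ℝ Δ, ∃ n : Fin 2 → ℤ, coeLat n = x ∧ Int.gcd (n 0) (n 1) = 1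

/-- Normalized volume of a 2-dimensional compact convex set in `ℝ²`:
twice its Lebesgue area. -/
def v2 (P : Set (Fin 2 → ℝ)) : ℝ := 2 * (volume P).toReal

/-!
Cut `Δ` into the half-open triangles over its edges. Over the edge from `u` to `w` the gauge is the
linear form equal to `1` at `u` and at `w`, and with `m = det(u, w)` the sum of `(1 - gauge) ^ 2`
over the lattice points of the triangle equals `(m - 3 + 2 / m) / 12` minus a Dedekind sum
`s(u, w)`: pairing each class modulo `u` and `w` with its negative turns it into a sum of squares
of sawtooth values. Written as averages over torsion points of the torus, Dedekind sums satisfy a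
three-term reciprocity law. Applied to `e`, `u`, `w` for an auxiliary primitive direction `e`, it
makes the sum of `s(u, w)` over all edges telescope. What remains is a rational expression in the
determinants, together with the signs of `det(e, u) det(e, w)`; both `e` and `-e` lie over exactly
one edge, so the signs add up to the number of edges minus `4`, and this `4` accounts for the term
of the origin.

The sum of the `m` is `v(Δ)`. The dual of `Δ` is the polygon whose vertices are the negatives of the
linear forms of the edges, and the same triangulation computes its area in terms of the
determinants of consecutive and next-to-consecutive vertices of `Δ`.
-/

/-- The representative in `[0, 1)` of a point of `ℝ / ℤ`. -/
def fractPart (x : UnitAddCircle) : ℝ := AddCircle.equivIco 1 0 x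

lemma fractPart_coe (t : ℝ) : fractPart t = Int.fract t := by
  simp [fractPart, AddCircle.coe_equivIco_mk_apply]

lemma fractPart_nonneg (x : UnitAddCircle) : 0 ≤ fractPart x :=
  (AddCircle.equivIco 1 0 x).2.1

lemma fractPart_lt_one (x : UnitAddCircle) : fractPart x < 1 :=
  (AddCircle.equivIco 1 0 x).2.2.trans_eq (zero_add 1)

lemma coe_fractPart (x : UnitAddCircle) : (fractPart x : UnitAddCircle) = x :=
  (AddCircle.equivIco 1 0).symm_apply_apply x

lemma fractPart_zero : fractPart 0 = 0 := by
  simpa using fractPart_coe 0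

lemma fractPart_eq_zero {x : UnitAddCircle} : fractPart x = 0 ↔ x = 0 := by
  refine ⟨fun h ↦ ?_, fun h ↦ h ▸ fractPart_zero⟩
  rw [← coe_fractPart x, h, AddCircle.coe_zero]

lemma fractPart_neg {x : UnitAddCircle} (hx : x ≠ 0) : fractPart (-x) = 1 - fractPart x := by
  rw [← coe_fractPart x, ← AddCircle.coe_neg, fractPart_coe, fractPart_coe,
    Int.fract_neg (by rwa [← fractPart_coe, coe_fractPart, Ne, fractPart_eq_zero])]

/-- The sawtooth function `((·))` on `ℝ / ℤ`: it is `fractPart x - 1 / 2` away from `0`, and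
the symmetrization makes it vanish at `0`. -/
def sawtooth (x : UnitAddCircle) : ℝ := (fractPart x - fractPart (-x)) / 2

/-- The indicator function of the point `0` of `ℝ / ℤ`, written through fractional parts. -/
def zeroIndicator (x : UnitAddCircle) : ℝ := 1 - fractPart x - fractPart (-x)

/-- The second periodic Bernoulli function `t ^ 2 - t + 1 / 6` on `ℝ / ℤ`. -/
def bernoulliTwo (x : UnitAddCircle) : ℝ := fractPart x ^ 2 - fractPart x + 1 / 6

lemma bernoulliTwo_zero : bernoulliTwo 0 = 1 / 6 := by
  simp [bernoulliTwo, fractPart_zero]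

lemma sawtooth_neg (x : UnitAddCircle) : sawtooth (-x) = -sawtooth x := by
  simp only [sawtooth, neg_neg]; ring

lemma sawtooth_zero : sawtooth 0 = 0 := by
  simp [sawtooth]

lemma sawtooth_of_ne_zero {x : UnitAddCircle} (hx : x ≠ 0) :
    sawtooth x = fractPart x - 1 / 2 := by
  rw [sawtooth, fractPart_neg hx]; ring

lemma zeroIndicator_neg (x : UnitAddCircle) : zeroIndicator (-x) = zeroIndicator x := by
  simp only [zeroIndicator, neg_neg]; ring

lemma zeroIndicator_zero : zeroIndicator 0 = 1 := by
  simp [zeroIndicator, fractPart_zero]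

lemma zeroIndicator_of_ne_zero {x : UnitAddCircle} (hx : x ≠ 0) : zeroIndicator x = 0 := by
  rw [zeroIndicator, fractPart_neg hx]; ring

lemma sawtooth_sq (x : UnitAddCircle) :
    sawtooth x ^ 2 = bernoulliTwo x + 1 / 12 - zeroIndicator x / 4 := by
  rcases eq_or_ne x 0 with rfl | hx
  · rw [sawtooth_zero, zeroIndicator_zero, bernoulliTwo, fractPart_zero]; norm_num
  · rw [sawtooth_of_ne_zero hx, zeroIndicator_of_ne_zero hx, bernoulliTwo]; ring

lemma fractPart_add (x y : UnitAddCircle) :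
    fractPart (x + y) = fractPart x + fractPart y ∨
      fractPart (x + y) = fractPart x + fractPart y - 1 := by
  have hxy : fractPart (x + y) = Int.fract (fractPart x + fractPart y) := by
    rw [← fractPart_coe, AddCircle.coe_add, coe_fractPart, coe_fractPart]
  rw [hxy]
  have hx := fractPart_nonneg x
  have hy := fractPart_nonneg y
  have hx' := fractPart_lt_one x
  have hy' := fractPart_lt_one y
  rcases lt_or_ge (fractPart x + fractPart y) 1 with h | h
  · exact .inl (Int.fract_eq_self.2 ⟨by positivity, h⟩)
  · refine .inr (Int.fract_eq_iff.2 ⟨by linarith, by linarith, 1, by simp⟩)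

lemma sq_sawtooth_add_add {x y z : UnitAddCircle} (h : x + y + z = 0) :
    (sawtooth x + sawtooth y + sawtooth z) ^ 2 =
      (1 - zeroIndicator x - zeroIndicator y - zeroIndicator z +
        2 * (zeroIndicator x * zeroIndicator y)) / 4 := by
  obtain rfl : z = -(x + y) := (neg_eq_of_add_eq_zero_right h).symm
  rw [sawtooth_neg, zeroIndicator_neg]
  rcases eq_or_ne x 0 with rfl | hx
  · rw [zero_add, zeroIndicator_zero, sawtooth_zero]; ring
  rcases eq_or_ne y 0 with rfl | hy
  · rw [add_zero, zeroIndicator_zero, sawtooth_zero]; ring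
  rw [zeroIndicator_of_ne_zero hx, zeroIndicator_of_ne_zero hy]
  rcases eq_or_ne (x + y) 0 with hxy | hxy
  · obtain rfl : y = -x := (neg_eq_of_add_eq_zero_right hxy).symm
    rw [add_neg_cancel, zeroIndicator_zero, sawtooth_neg, sawtooth_zero]; ring
  rw [zeroIndicator_of_ne_zero hxy, sawtooth_of_ne_zero hx, sawtooth_of_ne_zero hy,
    sawtooth_of_ne_zero hxy]
  rcases fractPart_add x y with h' | h' <;> rw [h'] <;> ring

lemma sawtooth_mul_cyclic {x y z : UnitAddCircle} (h : x + y + z = 0) :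
    sawtooth x * sawtooth y + sawtooth y * sawtooth z + sawtooth z * sawtooth x =
      zeroIndicator x * zeroIndicator y / 4 -
        (bernoulliTwo x + bernoulliTwo y + bernoulliTwo z) / 2 := by
  linear_combination (sq_sawtooth_add_add h - sawtooth_sq x - sawtooth_sq y - sawtooth_sq z) / 2

lemma card_mul_sum_comp {G H : Type*} [AddGroup G] [AddGroup H] [Fintype G] [Fintype H]
    {φ : G →+ H} (hφ : Function.Surjective φ) (f : H → ℝ) :
    Fintype.card H * ∑ g, f (φ g) = Fintype.card G * ∑ h, f h := by
  have sum_comp_eq (h : H) : ∑ g, f (φ g) = ∑ g, f (φ g + h) := by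
    obtain ⟨g₀, rfl⟩ := hφ h
    simpa using (Equiv.sum_comp (Equiv.addRight g₀) fun g ↦ f (φ g)).symm
  have sum_translate (g : G) : ∑ h, f (φ g + h) = ∑ h, f h := Equiv.sum_comp (Equiv.addLeft (φ g)) f
  calc Fintype.card H * ∑ g, f (φ g) = ∑ h, ∑ g, f (φ g + h) := by
        simp [← sum_comp_eq]
    _ = ∑ g, ∑ h, f (φ g + h) := Finset.sum_comm
    _ = Fintype.card G * ∑ h, f h := by
        simp [sum_translate]

section Distribution

open ZMod (toAddCircle)

variable {a : ℕ} [NeZero a]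

lemma sum_comp_zmodVal (f : ℕ → ℝ) : ∑ s : ZMod a, f s.val = ∑ j ∈ Finset.range a, f j := by
  obtain _ | n := a
  · exact absurd rfl (NeZero.ne 0)
  · exact (Finset.sum_range f).symm

lemma sum_zmodVal (a : ℕ) [NeZero a] : ∑ s : ZMod a, (s.val : ℝ) = a * (a - 1) / 2 := by
  rw [sum_comp_zmodVal (fun j ↦ (j : ℝ))]
  exact Finset.sum_range_induction _ (fun n ↦ (n : ℝ) * (n - 1) / 2) (by simp) a
    fun n _ ↦ by push_cast; ring

lemma sum_sq_zmodVal (a : ℕ) [NeZero a] :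
    ∑ s : ZMod a, (s.val : ℝ) ^ 2 = a * (a - 1) * (2 * a - 1) / 6 := by
  rw [sum_comp_zmodVal (fun j ↦ (j : ℝ) ^ 2)]
  exact Finset.sum_range_induction _ (fun n ↦ (n : ℝ) * (n - 1) * (2 * n - 1) / 6) (by simp) a
    fun n _ ↦ by push_cast; ring

lemma exists_fractPart_add_toAddCircle (y : UnitAddCircle) :
    ∃ s₀ : ZMod a, ∀ s : ZMod a,
      fractPart (y + toAddCircle (s + s₀)) = (fractPart (a • y) + s.val) / a := by
  have ha : (0 : ℝ) < a := mod_cast NeZero.pos a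
  obtain ⟨t, rfl⟩ := QuotientAddGroup.mk_surjective y
  refine ⟨(-⌊a * t⌋ : ℤ), fun s ↦ ?_⟩
  rw [map_add, ZMod.toAddCircle_intCast, ZMod.toAddCircle_apply, ← AddCircle.coe_nsmul,
    ← AddCircle.coe_add, ← AddCircle.coe_add, fractPart_coe, fractPart_coe, nsmul_eq_mul]
  have hs : (s.val : ℝ) + 1 ≤ a := mod_cast s.val_lt
  have h0 := Int.fract_nonneg (a * t)
  have h1 := Int.fract_lt_one (a * t)
  rw [Int.fract_eq_iff]
  refine ⟨div_nonneg (add_nonneg h0 (Nat.cast_nonneg _)) ha.le,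
    (div_lt_one ha).2 (by linarith), 0, ?_⟩
  rw [Int.fract]
  push_cast
  field_simp
  ring

lemma sum_fractPart_add_toAddCircle (y : UnitAddCircle) :
    ∑ s : ZMod a, fractPart (y + toAddCircle s) = fractPart (a • y) + (a - 1) / 2 := by
  have ha : (a : ℝ) ≠ 0 := mod_cast NeZero.ne a
  obtain ⟨s₀, hs₀⟩ := exists_fractPart_add_toAddCircle (a := a) y
  rw [← Equiv.sum_comp (Equiv.addRight s₀)]
  simp only [Equiv.coe_addRight, hs₀]
  rw [← Finset.sum_div, Finset.sum_add_distrib, sum_zmodVal]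
  simp only [Finset.sum_const, Finset.card_univ, ZMod.card, nsmul_eq_mul]
  field_simp

lemma sum_fractPart_neg_add_toAddCircle (y : UnitAddCircle) :
    ∑ s : ZMod a, fractPart (-(y + toAddCircle s)) = fractPart (-(a • y)) + (a - 1) / 2 := by
  rw [← smul_neg, ← sum_fractPart_add_toAddCircle, ← Equiv.sum_comp (Equiv.neg (ZMod a))]
  simp [neg_add_rev, add_comm]

lemma sum_sawtooth_add_toAddCircle (y : UnitAddCircle) :
    ∑ s : ZMod a, sawtooth (y + toAddCircle s) = sawtooth (a • y) := by
  simp only [sawtooth, ← Finset.sum_div, Finset.sum_sub_distrib, sum_fractPart_add_toAddCircle,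
    sum_fractPart_neg_add_toAddCircle]
  ring

lemma sum_zeroIndicator_add_toAddCircle (y : UnitAddCircle) :
    ∑ s : ZMod a, zeroIndicator (y + toAddCircle s) = zeroIndicator (a • y) := by
  simp only [zeroIndicator, Finset.sum_sub_distrib, sum_fractPart_add_toAddCircle,
    sum_fractPart_neg_add_toAddCircle, Finset.sum_const, Finset.card_univ, ZMod.card, nsmul_eq_mul]
  ring

lemma sum_bernoulliTwo_add_toAddCircle (y : UnitAddCircle) :
    ∑ s : ZMod a, bernoulliTwo (y + toAddCircle s) = bernoulliTwo (a • y) / a := by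
  have ha : (a : ℝ) ≠ 0 := mod_cast NeZero.ne a
  obtain ⟨s₀, hs₀⟩ := exists_fractPart_add_toAddCircle (a := a) y
  rw [← Equiv.sum_comp (Equiv.addRight s₀)]
  simp only [Equiv.coe_addRight, bernoulliTwo, hs₀, div_pow, add_sq, Finset.sum_add_distrib,
    Finset.sum_sub_distrib, ← Finset.sum_div, ← Finset.mul_sum, sum_zmodVal, sum_sq_zmodVal,
    Finset.sum_const, Finset.card_univ, ZMod.card, nsmul_eq_mul]
  field_simp
  ring

lemma sum_sq_sawtooth_toAddCircle (a : ℕ) [NeZero a] :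
    ∑ x : ZMod a, sawtooth (toAddCircle x) ^ 2 = a / 12 - 1 / 4 + 1 / (6 * a) := by
  have hB := sum_bernoulliTwo_add_toAddCircle (a := a) 0
  have hZ := sum_zeroIndicator_add_toAddCircle (a := a) 0
  simp only [zero_add, smul_zero, bernoulliTwo_zero, zeroIndicator_zero] at hB hZ
  simp only [sawtooth_sq, Finset.sum_sub_distrib, Finset.sum_add_distrib, ← Finset.sum_div, hB, hZ,
    Finset.sum_const, Finset.card_univ, ZMod.card, nsmul_eq_mul]
  ring

lemma sum_smul_toAddCircle {r : ℤ} (hr : IsCoprime (a : ℤ) r) (f : UnitAddCircle → ℝ) :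
    ∑ x : ZMod a, f (r • toAddCircle x) = ∑ x : ZMod a, f (toAddCircle x) := by
  have hunit := (ZMod.coe_int_isUnit_iff_isCoprime r a).2 hr
  simp only [← map_zsmul, zsmul_eq_mul]
  exact Fintype.sum_bijective _ hunit.unit.mulLeft_bijective _ _ fun _ ↦ rfl

/-- Multiplication by a divisor `c` of `N` maps `ZMod N` onto a copy of `ZMod (N / |c|)`. -/
lemma mul_sum_smul_toAddCircle {N : ℕ} [NeZero N] {c : ℤ} (hN : a * c.natAbs = N)
    (f : UnitAddCircle → ℝ) :
    a * ∑ t : ZMod N, f (c • toAddCircle t) = N * ∑ s : ZMod a, f (toAddCircle s) := by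
  have hdvd : a ∣ N := ⟨_, hN.symm⟩
  have hcard := card_mul_sum_comp (φ := (ZMod.castHom hdvd (ZMod a)).toAddMonoidHom)
    (ZMod.castHom_surjective hdvd)
  simp only [ZMod.card, RingHom.toAddMonoidHom_eq_coe, AddMonoidHom.coe_coe] at hcard
  have key (t : ZMod N) :
      c.natAbs • toAddCircle t = toAddCircle (ZMod.castHom hdvd (ZMod a) t) := by
    obtain ⟨j, rfl⟩ := ZMod.natCast_zmod_surjective t
    have ha : (a : ℝ) ≠ 0 := mod_cast NeZero.ne a
    have hc : (c.natAbs : ℝ) ≠ 0 := fun h ↦ NeZero.ne N (by simp_all)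
    rw [map_natCast (ZMod.castHom hdvd _), ZMod.toAddCircle_natCast, ZMod.toAddCircle_natCast,
      ← AddCircle.coe_nsmul, nsmul_eq_mul, ← hN]
    congr 1
    push_cast
    field_simp
  rw [← hcard fun s ↦ f (toAddCircle s)]
  simp only [← key]
  congr 1
  have hc := Int.natAbs_eq c
  generalize c.natAbs = k at hc
  rcases hc with rfl | rfl
  · simp only [natCast_zsmul]
  · rw [← Equiv.sum_comp (Equiv.neg (ZMod N))]
    simp

/-- The distribution relation at all divisors of `N`, of both signs, for a function on `ℝ / ℤ`;
the weight `ω` records the parity of the function. -/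
def HasDistributionRelation (N : ℕ) [NeZero N] (ω : ℤ → ℝ) (f : UnitAddCircle → ℝ) : Prop :=
  ∀ ⦃a c : ℤ⦄, a * c = N → ∀ y,
    ω a * ∑ t : ZMod N, f (y + c • toAddCircle t) = N * f (a • y)

lemma natAbs_mul_sum_add_smul_toAddCircle {N : ℕ} [NeZero N] {f : UnitAddCircle → ℝ}
    (hf : ∀ (a : ℕ) [NeZero a] (y : UnitAddCircle),
      ∑ s : ZMod a, f (y + toAddCircle s) = f (a • y))
    {a c : ℤ} (hN : a * c = N) (y : UnitAddCircle) :
    |(a : ℝ)| * ∑ t : ZMod N, f (y + c • toAddCircle t) = N * f (a.natAbs • y) := by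
  have hN' : a.natAbs * c.natAbs = N := by rw [← Int.natAbs_mul, hN, Int.natAbs_natCast]
  have : NeZero a.natAbs := ⟨fun h ↦ NeZero.ne N (by rw [← hN', h, zero_mul])⟩
  rw [← hf a.natAbs, ← mul_sum_smul_toAddCircle hN' fun x ↦ f (y + x), Nat.cast_natAbs,
    Int.cast_abs]

lemma hasDistributionRelation_sawtooth (N : ℕ) [NeZero N] :
    HasDistributionRelation N (fun a ↦ a) sawtooth := by
  intro a c hN y
  have h := natAbs_mul_sum_add_smul_toAddCircle (fun _ _ ↦ sum_sawtooth_add_toAddCircle) hN y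
  rcases le_total 0 a with ha | ha
  · rwa [abs_of_nonneg (mod_cast ha), ← natCast_zsmul, Int.natAbs_of_nonneg ha] at h
  · rw [abs_of_nonpos (mod_cast ha), ← natCast_zsmul, Int.ofNat_natAbs_of_nonpos ha, neg_zsmul,
      sawtooth_neg] at h
    linear_combination -h

lemma hasDistributionRelation_zeroIndicator (N : ℕ) [NeZero N] :
    HasDistributionRelation N (fun a ↦ |(a : ℝ)|) zeroIndicator := by
  intro a c hN y
  have h := natAbs_mul_sum_add_smul_toAddCircle (fun _ _ ↦ sum_zeroIndicator_add_toAddCircle) hN y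
  rcases le_total 0 a with ha | ha
  · rwa [← natCast_zsmul, Int.natAbs_of_nonneg ha] at h
  · rwa [← natCast_zsmul, Int.ofNat_natAbs_of_nonpos ha, neg_zsmul, zeroIndicator_neg] at h

lemma sum_bernoulliTwo_smul_toAddCircle {N : ℕ} [NeZero N] {a c : ℤ} (hN : a * c = N) :
    ∑ t : ZMod N, bernoulliTwo (c • toAddCircle t) = N / (6 * a ^ 2) := by
  have hN' : a.natAbs * c.natAbs = N := by rw [← Int.natAbs_mul, hN, Int.natAbs_natCast]
  have ha : a.natAbs ≠ 0 := fun h ↦ NeZero.ne N (by rw [← hN', h, zero_mul])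
  have : NeZero a.natAbs := ⟨ha⟩
  have hB := sum_bernoulliTwo_add_toAddCircle (a := a.natAbs) 0
  simp only [zero_add, smul_zero, bernoulliTwo_zero] at hB
  have h := mul_sum_smul_toAddCircle hN' bernoulliTwo
  rw [hB] at h
  have ha' : (a.natAbs : ℝ) ≠ 0 := mod_cast ha
  have hsq : (a : ℝ) ^ 2 = (a.natAbs : ℝ) ^ 2 := by rw [Nat.cast_natAbs, Int.cast_abs, sq_abs]
  rw [hsq]
  field_simp at h ⊢
  linear_combination h

end Distribution

section Determinant

variable {R : Type*} [CommRing R]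

/-- The determinant of the `2 × 2` matrix with rows `u` and `w`. -/
def det2 (u w : Fin 2 → R) : R := u 0 * w 1 - u 1 * w 0

lemma det2_self (u : Fin 2 → R) : det2 u u = 0 := by
  rw [det2]; ring

lemma det2_swap (u w : Fin 2 → R) : det2 w u = -det2 u w := by
  rw [det2, det2]; ring

lemma det2_neg_right (u w : Fin 2 → R) : det2 u (-w) = -det2 u w := by
  simp only [det2, Pi.neg_apply]; ring

lemma det2_neg_left (u w : Fin 2 → R) : det2 (-u) w = -det2 u w := by
  simp only [det2, Pi.neg_apply]; ring

lemma det2_mul_det2 (a b u w : Fin 2 → R) :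
    det2 a b * det2 u w = det2 a u * det2 b w - det2 a w * det2 b u := by
  simp only [det2]; ring

lemma det2_smul_cyclic (u v w : Fin 2 → R) :
    det2 v w • u + det2 w u • v + det2 u v • w = 0 := by
  ext i
  fin_cases i <;> simp [det2] <;> ring

lemma eq_smul_add_smul_of_det2_eq_one {u v : Fin 2 → R} (hv : det2 u v = 1) (w : Fin 2 → R) :
    w = det2 w v • u + det2 u w • v := by
  have h := det2_smul_cyclic u v w
  rw [hv, one_smul, det2_swap w v, det2_swap u w] at h
  rw [← sub_eq_zero, ← h]
  module

lemma exists_det2_eq_one {u : Fin 2 → R} (hu : IsCoprime (u 0) (u 1)) : ∃ v, det2 u v = 1 := by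
  obtain ⟨s, t, h⟩ := hu
  refine ⟨![-t, s], ?_⟩
  simp only [det2, Matrix.cons_val_zero, Matrix.cons_val_one]
  linear_combination h

lemma exists_det2_eq_of_det2_eq_one {u v : Fin 2 → R} (hv : det2 u v = 1) (a b : R) :
    ∃ n, det2 n v = a ∧ det2 u n = b := by
  simp only [det2] at hv
  refine ⟨a • u + b • v, ?_, ?_⟩ <;> simp only [det2, Pi.add_apply, Pi.smul_apply, smul_eq_mul]
  · linear_combination a * hv
  · linear_combination b * hv

end Determinant

section DetChar

open ZMod (toAddCircle)

/-- The homomorphism `n ↦ det(u, n)` on pairs of residues modulo `N`. -/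
def detMod (N : ℕ) (u : Fin 2 → ℤ) : (Fin 2 → ZMod N) →+ ZMod N where
  toFun n := det2 (fun i ↦ (u i : ZMod N)) n
  map_zero' := by simp [det2]
  map_add' n n' := by simp only [det2, Pi.add_apply]; ring

lemma detMod_apply {N : ℕ} (u : Fin 2 → ℤ) (n : Fin 2 → ZMod N) :
    detMod N u n = u 0 * n 1 - u 1 * n 0 := rfl

lemma detMod_surjective {N : ℕ} {u : Fin 2 → ℤ} (hu : IsCoprime (u 0) (u 1)) :
    Function.Surjective (detMod N u) := by
  obtain ⟨v, hv⟩ := exists_det2_eq_one hu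
  intro t
  refine ⟨t • fun i ↦ (v i : ZMod N), ?_⟩
  have : ((det2 u v : ℤ) : ZMod N) = 1 := by rw [hv, Int.cast_one]
  push_cast [det2] at this
  simp only [detMod_apply, Pi.smul_apply, smul_eq_mul]
  linear_combination t * this

/-- The character `n ↦ det(u, n) / N mod 1` on pairs of residues modulo `N`. -/
def detChar (N : ℕ) [NeZero N] (u : Fin 2 → ℤ) : (Fin 2 → ZMod N) →+ UnitAddCircle :=
  (toAddCircle (N := N)).comp (detMod N u)

variable {N : ℕ} [NeZero N]

lemma smul_detChar_eq_zero (u : Fin 2 → ℤ) (n : Fin 2 → ZMod N) : (N : ℤ) • detChar N u n = 0 := by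
  simp [detChar, ← map_nsmul]

lemma detChar_add_smul (u w : Fin 2 → ℤ) (n : Fin 2 → ZMod N) (t : ZMod N) :
    detChar N u (n + t • fun i ↦ (w i : ZMod N)) = detChar N u n + det2 u w • toAddCircle t := by
  simp only [detChar, AddMonoidHom.comp_apply, ← map_zsmul, ← map_add]
  congr 1
  simp only [detMod_apply, det2, Pi.add_apply, Pi.smul_apply, smul_eq_mul, zsmul_eq_mul]
  push_cast
  ring

lemma detChar_smul_add_smul (k l : ℤ) (u w : Fin 2 → ℤ) (n : Fin 2 → ZMod N) :
    detChar N (k • u + l • w) n = k • detChar N u n + l • detChar N w n := by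
  simp only [detChar, AddMonoidHom.comp_apply, ← map_zsmul, ← map_add]
  congr 1
  simp only [detMod_apply, Pi.add_apply, Pi.smul_apply, smul_eq_mul]
  push_cast [zsmul_eq_mul]
  ring

lemma sum_comp_detChar {u : Fin 2 → ℤ} (hu : IsCoprime (u 0) (u 1)) (f : UnitAddCircle → ℝ) :
    ∑ n, f (detChar N u n) = N * ∑ t : ZMod N, f (toAddCircle t) := by
  have h := card_mul_sum_comp (detMod_surjective (N := N) hu) fun t ↦ f (toAddCircle t)
  simp only [Fintype.card_pi, ZMod.card, Fin.prod_univ_two] at h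
  have hN : (N : ℝ) ≠ 0 := mod_cast NeZero.ne N
  refine mul_left_cancel₀ hN (h.trans ?_)
  push_cast; ring

variable {ω : ℤ → ℝ} {f : UnitAddCircle → ℝ}

/-- Averaging over the translates of `n` along `d`, where `G` does not change. -/
lemma HasDistributionRelation.sum_smul_detChar_mul (hf : HasDistributionRelation N ω f)
    {k c : ℤ} {u d : Fin 2 → ℤ} (hN : k * (c * det2 u d) = N) {G : (Fin 2 → ZMod N) → ℝ}
    (hG : ∀ n (t : ZMod N), G (n + t • fun i ↦ (d i : ZMod N)) = G n) :
    ω k * ∑ n, f (c • detChar N u n) * G n = ∑ n, f ((k * c) • detChar N u n) * G n := by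
  have hN0 : (N : ℝ) ≠ 0 := mod_cast NeZero.ne N
  have translate (t : ZMod N) : ∑ n, f (c • detChar N u n) * G n =
      ∑ n, f (c • detChar N u n + (c * det2 u d) • toAddCircle t) * G n := by
    rw [← Equiv.sum_comp (Equiv.addRight (t • fun i ↦ (d i : ZMod N)))]
    simp only [Equiv.coe_addRight, hG, detChar_add_smul, smul_add, mul_smul]
  refine mul_left_cancel₀ hN0 ?_
  calc N * (ω k * ∑ n, f (c • detChar N u n) * G n)
      = ω k * ∑ t : ZMod N, ∑ n, f (c • detChar N u n + (c * det2 u d) • toAddCircle t) * G n := by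
        simp only [← translate, Finset.sum_const, Finset.card_univ, ZMod.card, nsmul_eq_mul]
        ring
    _ = ∑ n, ω k * (∑ t : ZMod N, f (c • detChar N u n + (c * det2 u d) • toAddCircle t)) *
          G n := by
        rw [Finset.sum_comm, Finset.mul_sum]
        exact Finset.sum_congr rfl fun n _ ↦ by rw [← Finset.sum_mul, mul_assoc]
    _ = N * ∑ n, f ((k * c) • detChar N u n) * G n := by
        rw [Finset.mul_sum]
        exact Finset.sum_congr rfl fun n _ ↦ by rw [hf hN, mul_smul, mul_assoc]

lemma HasDistributionRelation.sum_mul (hf : HasDistributionRelation N ω f) {u w : Fin 2 → ℤ}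
    {k l c d M : ℤ} (hM : M * det2 u w = N) (hk : k * c = M) (hl : l * d = M) :
    ω k * ω l * ∑ n, f (c • detChar N u n) * f (d • detChar N w n) =
      ∑ n, f (M • detChar N u n) * f (M • detChar N w n) := by
  rw [mul_comm (ω k), mul_assoc, hf.sum_smul_detChar_mul (d := w) (by rw [← hM, ← hk]; ring)]
  · simp only [mul_comm (f ((k * c) • _))]
    rw [hf.sum_smul_detChar_mul (d := -u) (by rw [← hM, ← hl, det2_neg_right, det2_swap]; ring),
      hk, hl]
    · exact Finset.sum_congr rfl fun _ _ ↦ mul_comm _ _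
    intro n t
    rw [detChar_add_smul, det2_neg_right, det2_self, neg_zero, zero_smul, add_zero]
  · intro n t
    rw [detChar_add_smul, det2_self, zero_smul, add_zero]

lemma sum_bernoulliTwo_smul_detChar {u : Fin 2 → ℤ} (hu : IsCoprime (u 0) (u 1)) {a c : ℤ}
    (hN : a * c = N) : ∑ n, bernoulliTwo (c • detChar N u n) = N ^ 2 / (6 * a ^ 2) := by
  rw [sum_comp_detChar hu fun x ↦ bernoulliTwo (c • x), sum_bernoulliTwo_smul_toAddCircle hN]
  ring

lemma smul_detChar_eq_smul {u v w : Fin 2 → ℤ} (hv : det2 u v = 1) {M : ℤ}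
    (hM : M * det2 u w = N) (n : Fin 2 → ZMod N) :
    M • detChar N w n = det2 w v • M • detChar N u n := by
  conv_lhs => rw [eq_smul_add_smul_of_det2_eq_one hv w]
  rw [detChar_smul_add_smul, smul_add, smul_comm, ← mul_smul M (det2 u w), hM,
    smul_detChar_eq_zero, add_zero]

lemma sum_zeroIndicator_smul_detChar {u w : Fin 2 → ℤ} (hu : IsCoprime (u 0) (u 1)) {M : ℤ}
    (hM : M * det2 u w = N) :
    |((det2 u w : ℤ) : ℝ)| *
      ∑ n, zeroIndicator (M • detChar N u n) * zeroIndicator (M • detChar N w n) = N ^ 2 := by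
  obtain ⟨v, hv⟩ := exists_det2_eq_one hu
  have absorb (n) : zeroIndicator (M • detChar N u n) * zeroIndicator (M • detChar N w n) =
      zeroIndicator (M • detChar N u n) := by
    rcases eq_or_ne (M • detChar N u n) 0 with h | h
    · rw [smul_detChar_eq_smul hv hM, h, smul_zero, zeroIndicator_zero, mul_one]
    · rw [zeroIndicator_of_ne_zero h, zero_mul]
  have h := hasDistributionRelation_zeroIndicator N (by rw [← hM]; ring : det2 u w * M = N) 0
  simp only [zero_add, smul_zero, zeroIndicator_zero, mul_one] at h
  simp only [absorb]
  rw [sum_comp_detChar hu fun x ↦ zeroIndicator (M • x)]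
  linear_combination N * h

/-- The Dedekind sum attached to two lattice vectors `u` and `w`, as an average over the `N`-torsion
of the torus; it does not depend on the multiple `N` of `det(u, w)`. -/
def dedekindSum (N : ℕ) [NeZero N] (u w : Fin 2 → ℤ) : ℝ :=
  det2 u w / N ^ 2 * ∑ n, sawtooth ((N / det2 u w : ℤ) • detChar N u n) *
    sawtooth ((N / det2 u w : ℤ) • detChar N w n)

lemma dedekindSum_swap (u w : Fin 2 → ℤ) : dedekindSum N w u = -dedekindSum N u w := by
  simp only [dedekindSum, det2_swap u w, Int.ediv_neg, neg_smul, sawtooth_neg, neg_mul_neg]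
  rw [Finset.sum_congr rfl fun _ _ ↦ mul_comm _ _]
  push_cast
  ring

lemma dedekindSum_eq {u w : Fin 2 → ℤ} {k l q : ℤ} (hN : q * k * l * det2 u w = N) :
    dedekindSum N u w = k * l * det2 u w / N ^ 2 *
      ∑ n, sawtooth ((q * l) • detChar N u n) * sawtooth ((q * k) • detChar N w n) := by
  have hdet : det2 u w ≠ 0 := fun h ↦ NeZero.ne N (by simpa [h] using hN.symm)
  have h := (hasDistributionRelation_sawtooth N).sum_mul hN (k := k) (l := l) (c := q * l)
    (d := q * k) (by ring) (by ring)
  rw [dedekindSum, ← hN, Int.mul_ediv_cancel _ hdet, ← h]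
  ring

section ThreeTerm

variable {u v w : Fin 2 → ℤ} {α β γ q : ℤ}

lemma detChar_cyclic (q : ℤ) (u v w : Fin 2 → ℤ) (n : Fin 2 → ZMod N) :
    (q * det2 v w) • detChar N u n + (q * det2 w u) • detChar N v n +
      (q * det2 u v) • detChar N w n = 0 := by
  simp only [detChar, AddMonoidHom.comp_apply, ← map_zsmul, ← map_add]
  rw [← map_zero (toAddCircle (N := N))]
  congr 1
  simp only [detMod_apply, det2, Pi.smul_apply]
  push_cast [zsmul_eq_mul]
  ring

lemma sum_zeroIndicator_mul_of_det2 (hu : IsCoprime (u 0) (u 1)) (hγ : det2 u v = γ)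
    (hN : q * α * β * γ = N) :
    ∑ n, zeroIndicator ((q * α) • detChar N u n) * zeroIndicator ((q * β) • detChar N v n) =
      N ^ 2 / |(α * β * γ : ℝ)| := by
  have hM : q * α * β * det2 u v = N := by rw [hγ, hN]
  have hne : (α * β * γ : ℝ) ≠ 0 := fun h ↦ NeZero.ne N (by
    have h' : α * β * γ = 0 := mod_cast h
    have : (N : ℤ) = q * (α * β * γ) := by rw [← hN]; ring
    simpa [h'] using this)
  have h := (hasDistributionRelation_zeroIndicator N).sum_mul hM (k := β) (l := α) (c := q * α)
    (d := q * β) (by ring) (by ring)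
  have h' := sum_zeroIndicator_smul_detChar hu hM
  rw [← h, hγ] at h'
  rw [eq_div_iff (abs_ne_zero.2 hne), abs_mul, abs_mul]
  linear_combination h'

lemma dedekindSum_add_cyclic (hα : det2 v w = α) (hβ : det2 w u = β) (hγ : det2 u v = γ)
    (hN : q * α * β * γ = N) :
    dedekindSum N u v + dedekindSum N v w + dedekindSum N w u = α * β * γ / N ^ 2 *
      ∑ n, (sawtooth ((q * α) • detChar N u n) * sawtooth ((q * β) • detChar N v n) +
        sawtooth ((q * β) • detChar N v n) * sawtooth ((q * γ) • detChar N w n) +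
        sawtooth ((q * γ) • detChar N w n) * sawtooth ((q * α) • detChar N u n)) := by
  rw [dedekindSum_eq (u := u) (w := v) (k := β) (l := α) (q := q) (by rw [hγ, ← hN]; ring),
    dedekindSum_eq (u := v) (w := w) (k := γ) (l := β) (q := q) (by rw [hα, ← hN]; ring),
    dedekindSum_eq (u := w) (w := u) (k := α) (l := γ) (q := q) (by rw [hβ, ← hN]; ring),
    hα, hβ, hγ, Finset.sum_add_distrib, Finset.sum_add_distrib]
  ring

/-- The points `q α u`, `q β v`, `q γ w` of the torus add up to zero, so the pairwise products of
their sawtooth values are given by `sawtooth_mul_cyclic`. -/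
theorem dedekindSum_three_term (hu : IsCoprime (u 0) (u 1)) (hv : IsCoprime (v 0) (v 1))
    (hw : IsCoprime (w 0) (w 1)) (hα : det2 v w = α) (hβ : det2 w u = β) (hγ : det2 u v = γ)
    (hN : q * α * β * γ = N) :
    dedekindSum N u v + dedekindSum N v w + dedekindSum N w u =
      SignType.sign (α * β * γ : ℝ) / 4 - (α ^ 2 + β ^ 2 + γ ^ 2 : ℝ) / (12 * (α * β * γ)) := by
  have hN0 : (N : ℝ) ≠ 0 := mod_cast NeZero.ne N
  have hNℝ : (q * α * β * γ : ℝ) = N := mod_cast hN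
  have hne : (α * β * γ : ℝ) ≠ 0 := fun h ↦ hN0 (by rw [← hNℝ]; linear_combination (q : ℝ) * h)
  obtain ⟨⟨hα0, hβ0⟩, hγ0⟩ : ((α : ℝ) ≠ 0 ∧ (β : ℝ) ≠ 0) ∧ (γ : ℝ) ≠ 0 := by simpa using hne
  have hpairs (n : Fin 2 → ZMod N) := sawtooth_mul_cyclic (detChar_cyclic (N := N) q u v w n)
  rw [hα, hβ, hγ] at hpairs
  rw [dedekindSum_add_cyclic hα hβ hγ hN, Finset.sum_congr rfl fun n _ ↦ hpairs n,
    Finset.sum_sub_distrib, ← Finset.sum_div, ← Finset.sum_div, Finset.sum_add_distrib,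
    Finset.sum_add_distrib, sum_zeroIndicator_mul_of_det2 hu hγ hN,
    sum_bernoulliTwo_smul_detChar hu (a := β * γ) (by rw [← hN]; ring),
    sum_bernoulliTwo_smul_detChar hv (a := γ * α) (by rw [← hN]; ring),
    sum_bernoulliTwo_smul_detChar hw (a := α * β) (by rw [← hN]; ring),
    eq_div_of_mul_eq (abs_ne_zero.2 hne) (sign_mul_abs (α * β * γ : ℝ))]
  have habs := abs_ne_zero.2 hne
  generalize |(α * β * γ : ℝ)| = A at habs
  push_cast
  field_simp
  ring

end ThreeTerm

end DetChar

section Cone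

open ZMod (toAddCircle)

/-- The linear form taking the value `1` at `u` and at `w`. -/
def edgeForm (u w y : Fin 2 → ℝ) : ℝ := (det2 y w + det2 u y) / det2 u w

/-- The cone spanned by `u` and `w` (in counterclockwise order), without the ray of `w`, so that
the cones over the edges of a polygon around the origin partition the punctured plane. -/
def halfOpenCone (u w : Fin 2 → ℝ) : Set (Fin 2 → ℝ) := {y | 0 < det2 y w ∧ 0 ≤ det2 u y}

/-- The triangle with vertices `0`, `u`, `w`, without its edge on the ray of `w`. -/
def halfOpenTriangle (u w : Fin 2 → ℝ) : Set (Fin 2 → ℝ) :=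
  {y | y ∈ halfOpenCone u w ∧ edgeForm u w y ≤ 1}

/-- The sum of `(1 - ℓ) ^ 2` over the lattice points of the half-open triangle spanned by `u` and
`w`, where `ℓ` is the linear form equal to `1` on its outer edge. -/
def coneSum (u w : Fin 2 → ℤ) : ℝ :=
  ∑ᶠ n ∈ latticePoints (halfOpenTriangle (coeLat u) (coeLat w)),
    (1 - edgeForm (coeLat u) (coeLat w) (coeLat n)) ^ 2

lemma det2_coeLat (u w : Fin 2 → ℤ) : det2 (coeLat u) (coeLat w) = det2 u w := by
  simp [det2, coeLat]

section Parallelogram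

variable {u v w : Fin 2 → ℤ} {m : ℕ}

lemma isCoprime_det2_of_det2_eq_one (hv : det2 u v = 1) (hw : IsCoprime (w 0) (w 1)) :
    IsCoprime (det2 v w) (det2 u w) := by
  obtain ⟨z, hz⟩ := exists_det2_eq_one hw
  refine ⟨-det2 u z, det2 v z, ?_⟩
  calc -det2 u z * det2 v w + det2 v z * det2 u w = det2 u v * det2 w z := by
        simp only [det2]; ring
    _ = 1 := by rw [hv, hz, one_mul]

lemma fractPart_toAddCircle_intCast [NeZero m] {j : ℤ} (h0 : 0 ≤ j) (hj : j < m) :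
    fractPart (toAddCircle (j : ZMod m)) = j / m := by
  have hm : (0 : ℝ) < m := mod_cast NeZero.pos m
  rw [ZMod.toAddCircle_intCast, fractPart_coe, Int.fract_eq_self]
  exact ⟨div_nonneg (mod_cast h0) hm.le, (div_lt_one hm).2 (mod_cast hj)⟩

lemma det2_eq_add_of_det2_eq_one (hv : det2 u v = 1) (hm : det2 u w = m) (n : Fin 2 → ℤ) :
    det2 n w = det2 u n * det2 v w + m * det2 n v := by
  rw [← hm]
  simp only [det2] at *
  linear_combination (-(n 0 * w 1) + n 1 * w 0) * hv

lemma bijOn_parallelogram [NeZero m] (hv : det2 u v = 1) (hw : IsCoprime (w 0) (w 1))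
    (hm : det2 u w = m) :
    Set.BijOn (fun n ↦ ((det2 u n : ℤ) : ZMod m))
      {n | det2 n w ∈ Set.Ioo 0 (m : ℤ) ∧ det2 u n ∈ Set.Ioo 0 (m : ℤ)} {0}ᶜ := by
  have hr : IsCoprime (m : ℤ) (det2 v w) := hm ▸ (isCoprime_det2_of_det2_eq_one hv hw).symm
  have hm0 : (0 : ℤ) < m := mod_cast NeZero.pos m
  refine ⟨fun n hn h ↦ ?_, fun n hn n' hn' h ↦ ?_, fun x hx ↦ ?_⟩
  · exact (Int.le_of_dvd hn.2.1 ((ZMod.intCast_zmod_eq_zero_iff_dvd _ _).1 h)).not_gt hn.2.2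
  · have hu : det2 u n = det2 u n' := by
      have := (ZMod.intCast_eq_intCast_iff' _ _ _).1 h
      rwa [Int.emod_eq_of_lt hn.2.1.le hn.2.2, Int.emod_eq_of_lt hn'.2.1.le hn'.2.2] at this
    have hw : det2 n w = det2 n' w := by
      rw [← Int.emod_eq_of_lt hn.1.1.le hn.1.2, ← Int.emod_eq_of_lt hn'.1.1.le hn'.1.2,
        det2_eq_add_of_det2_eq_one hv hm, hu, det2_eq_add_of_det2_eq_one hv hm n',
        Int.add_mul_emod_self_left, Int.add_mul_emod_self_left]
    refine smul_right_injective _ (hm ▸ hm0.ne' : det2 u w ≠ 0) ?_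
    have h1 := det2_smul_cyclic u n w
    have h2 := det2_smul_cyclic u n' w
    rw [det2_swap u w, hu, hw] at h1
    rw [det2_swap u w] at h2
    linear_combination h2 - h1
  · have hx0 : 0 < (x.val : ℤ) := mod_cast ZMod.val_pos.2 hx
    have hxm : (x.val : ℤ) < m := mod_cast x.val_lt
    obtain ⟨n, hnv, hun⟩ :=
      exists_det2_eq_of_det2_eq_one hv (-(x.val * det2 v w / m)) (x.val : ℤ)
    have hnw : det2 n w = x.val * det2 v w % m := by
      rw [det2_eq_add_of_det2_eq_one hv hm, hun, hnv, Int.emod_def]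
      ring
    have hndvd : ¬ (m : ℤ) ∣ x.val * det2 v w := fun h ↦
      (Int.le_of_dvd hx0 (hr.dvd_of_dvd_mul_right h)).not_gt hxm
    refine ⟨n, ⟨⟨?_, ?_⟩, ?_, ?_⟩, ?_⟩
    · exact hnw ▸ (Int.emod_pos_of_not_dvd hndvd).resolve_left hm0.ne'
    · exact hnw ▸ Int.emod_lt_of_pos _ hm0
    · rwa [hun]
    · rwa [hun]
    · simp [hun]

/-- The two summands `x` and `-x` complement each other: they are the squares of the positive and
the negative part of `-(sawtooth x + sawtooth y)`. -/
lemma max_sq_add_max_sq {x y : UnitAddCircle} (hx : x ≠ 0) (hy : y ≠ 0) :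
    max (1 - (fractPart y + fractPart x)) 0 ^ 2 +
      max (1 - (fractPart (-y) + fractPart (-x))) 0 ^ 2 = (sawtooth x + sawtooth y) ^ 2 := by
  rw [fractPart_neg hx, fractPart_neg hy, sawtooth_of_ne_zero hx, sawtooth_of_ne_zero hy]
  rcases le_total (fractPart y + fractPart x) 1 with h | h
  · rw [max_eq_left (by linarith), max_eq_right (by linarith)]; ring
  · rw [max_eq_right (by linarith), max_eq_left (by linarith)]; ring

lemma coneSum_eq_finsum_parallelogram [NeZero m] (hv : det2 u v = 1) (hm : det2 u w = m) :
    coneSum u w =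
      ∑ᶠ n ∈ {n | det2 n w ∈ Set.Ioo 0 (m : ℤ) ∧ det2 u n ∈ Set.Ioo 0 (m : ℤ)},
        max (1 - (((det2 n w : ℤ) : ℝ) / m + ((det2 u n : ℤ) : ℝ) / m)) 0 ^ 2 := by
  classical
  have hm0 : (0 : ℝ) < m := mod_cast NeZero.pos m
  rw [coneSum, finsum_mem_def, finsum_mem_def]
  refine finsum_congr fun n ↦ ?_
  have hdvd : det2 u n = 0 → (m : ℤ) ∣ det2 n w := fun h ↦ by
    rw [det2_eq_add_of_det2_eq_one hv hm, h, zero_mul, zero_add]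
    exact dvd_mul_right _ _
  simp only [Set.indicator_apply, latticePoints, halfOpenTriangle, halfOpenCone, edgeForm,
    det2_coeLat, hm, Set.mem_ofPred_eq, and_assoc, Set.mem_Ioo, Int.cast_natCast, Int.cast_pos,
    Int.cast_nonneg_iff, ← add_div, div_le_one hm0]
  have hle : ((det2 n w : ℤ) : ℝ) + (det2 u n : ℤ) ≤ m ↔ det2 n w + det2 u n ≤ m := by norm_cast
  simp only [hle]
  split_ifs with h₁ h₂ h₂ <;> generalize det2 n w = a at * <;> generalize det2 u n = b at *
  · rw [max_eq_left (sub_nonneg.2 ((div_le_one hm0).2 (hle.2 h₁.2.2)))]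
  · have hab : a + b = m := by
      rcases h₁.2.1.eq_or_lt with rfl | hb
      · have := Int.le_of_dvd h₁.1 (hdvd rfl)
        omega
      · omega
    rw [← Int.cast_add, hab, Int.cast_natCast, div_self hm0.ne', sub_self, zero_pow two_ne_zero]
  · have hab : (m : ℝ) ≤ a + b := (not_le.1 (hle.not.2 (by omega))).le
    rw [max_eq_right (sub_nonpos.2 ((one_le_div hm0).2 hab)), zero_pow two_ne_zero]
  · rfl

lemma two_mul_coneSum [NeZero m] (hv : det2 u v = 1) (hw : IsCoprime (w 0) (w 1))
    (hm : det2 u w = m) :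
    2 * coneSum u w =
      ∑ x : ZMod m, (sawtooth (toAddCircle x) + sawtooth (det2 v w • toAddCircle x)) ^ 2 := by
  classical
  have hr : IsCoprime (m : ℤ) (det2 v w) := hm ▸ (isCoprime_det2_of_det2_eq_one hv hw).symm
  set g : ZMod m → ℝ := fun x ↦
    max (1 - (fractPart (det2 v w • toAddCircle x) + fractPart (toAddCircle x))) 0 ^ 2
  have hcone : coneSum u w = ∑ x ∈ {0}ᶜ, g x := by
    rw [coneSum_eq_finsum_parallelogram hv hm,
      finsum_mem_eq_of_bijOn (g := g) _ (bijOn_parallelogram hv hw hm) fun n hn ↦ ?_,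
      ← Finset.coe_singleton, ← Finset.coe_compl, finsum_mem_coe_finset]
    have hmul : (det2 v w : ℤ) • toAddCircle ((det2 u n : ℤ) : ZMod m) =
        toAddCircle ((det2 n w : ℤ) : ZMod m) := by
      rw [← map_zsmul, det2_eq_add_of_det2_eq_one hv hm n]
      simp [mul_comm]
    simp only [g, hmul, fractPart_toAddCircle_intCast hn.1.1.le hn.1.2,
      fractPart_toAddCircle_intCast hn.2.1.le hn.2.2]
  have hneg : ∑ x ∈ {0}ᶜ, g (-x) = ∑ x ∈ {0}ᶜ, g x :=
    Finset.sum_equiv (Equiv.neg _) (by simp) (by simp)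
  rw [two_mul, hcone]
  nth_rw 2 [← hneg]
  rw [← Finset.sum_add_distrib, Fintype.sum_eq_add_sum_compl 0]
  simp only [map_zero, smul_zero, sawtooth_zero, add_zero, zero_pow two_ne_zero, zero_add]
  refine Finset.sum_congr rfl fun x hx ↦ ?_
  have hx0 : toAddCircle x ≠ 0 := by simpa using hx
  have hrx : det2 v w • toAddCircle x ≠ 0 := by
    have hunit := (ZMod.coe_int_isUnit_iff_isCoprime _ m).2 hr
    rwa [← map_zsmul, zsmul_eq_mul, Ne, ZMod.toAddCircle_eq_zero, hunit.mul_right_eq_zero,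
      ← ZMod.toAddCircle_eq_zero]
  simp only [g, map_neg, smul_neg, max_sq_add_max_sq hx0 hrx]

end Parallelogram

section Formula

variable {N m : ℕ} [NeZero N] [NeZero m] {u v w : Fin 2 → ℤ} {M : ℤ}

lemma dedekindSum_eq_sum_zmod (hu : IsCoprime (u 0) (u 1)) (hv : det2 u v = 1)
    (hm : det2 u w = m) (hM : m * M = N) :
    dedekindSum N u w =
      -∑ x : ZMod m, sawtooth (toAddCircle x) * sawtooth (det2 v w • toAddCircle x) := by
  have : (N : ℝ) ≠ 0 := mod_cast NeZero.ne N
  have hdiv : (N / det2 u w : ℤ) = M := by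
    rw [hm, ← hM, Int.mul_ediv_cancel_left _ (mod_cast NeZero.ne m)]
  have hM' : M * det2 u w = N := by rw [hm, mul_comm, hM]
  have hnatAbs : m * M.natAbs = N := by
    rw [← Int.natAbs_natCast m, ← Int.natAbs_mul, hM, Int.natAbs_natCast]
  have h := mul_sum_smul_toAddCircle hnatAbs fun x ↦ sawtooth x * sawtooth (det2 v w • x)
  rw [dedekindSum, hdiv, hm, Int.cast_natCast]
  simp only [smul_detChar_eq_smul hv hM', det2_swap v w, neg_smul, sawtooth_neg, mul_neg,
    Finset.sum_neg_distrib, neg_inj]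
  rw [sum_comp_detChar hu fun x ↦ sawtooth (M • x) * sawtooth (det2 v w • M • x)]
  field_simp
  linear_combination h

theorem coneSum_eq (hu : IsCoprime (u 0) (u 1)) (hw : IsCoprime (w 0) (w 1))
    (hm : det2 u w = m) (hM : m * M = N) :
    12 * coneSum u w = m - 3 + 2 / m - 12 * dedekindSum N u w := by
  obtain ⟨v, hv⟩ := exists_det2_eq_one hu
  have hr : IsCoprime (m : ℤ) (det2 v w) := hm ▸ (isCoprime_det2_of_det2_eq_one hv hw).symm
  have h := two_mul_coneSum hv hw hm
  simp only [add_sq, Finset.sum_add_distrib, mul_assoc, ← Finset.mul_sum] at h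
  rw [sum_smul_toAddCircle hr fun x ↦ sawtooth x ^ 2, sum_sq_sawtooth_toAddCircle] at h
  linear_combination 6 * h + 12 * dedekindSum_eq_sum_zmod hu hv hm hM

end Formula

end Cone

section EdgeForm

variable {u w x y : Fin 2 → ℝ}

lemma edgeForm_left (h : det2 u w ≠ 0) : edgeForm u w u = 1 := by
  rw [edgeForm, det2_self, add_zero, div_self h]

lemma edgeForm_right (h : det2 u w ≠ 0) : edgeForm u w w = 1 := by
  rw [edgeForm, det2_self, zero_add, div_self h]

lemma isLinearMap_edgeForm (u w : Fin 2 → ℝ) : IsLinearMap ℝ (edgeForm u w) where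
  map_add y z := by simp only [edgeForm, det2, Pi.add_apply]; ring
  map_smul c y := by simp only [edgeForm, det2, Pi.smul_apply, smul_eq_mul]; ring

lemma eq_smul_add_smul_of_det2_ne_zero (h : det2 u w ≠ 0) (y : Fin 2 → ℝ) :
    y = (det2 y w / det2 u w) • u + (det2 u y / det2 u w) • w := by
  have hc := det2_smul_cyclic u y w
  rw [det2_swap u w, neg_smul] at hc
  refine smul_right_injective _ h ?_
  simp only [smul_add, smul_smul, mul_div_cancel₀ _ h]
  linear_combination (exp := 1) -hc

lemma edgeForm_mul_det2 (a b u w y : Fin 2 → ℝ) :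
    edgeForm a b y * det2 u w = det2 y w * edgeForm a b u + det2 u y * edgeForm a b w := by
  simp only [edgeForm, det2]
  ring

lemma ne_of_det2_pos (h : 0 < det2 u w) : u ≠ w := by
  rintro rfl
  exact h.ne' (det2_self u)

lemma eq_zero_of_forall_det2_eq_zero (h : ∀ x, det2 y x = 0) : y = 0 := by
  have h0 := h ![0, 1]
  have h1 := h ![1, 0]
  ext i
  fin_cases i <;> simp_all [det2]

lemma smul_mem_halfOpenCone (h : 0 < det2 u w) {c : ℝ} (hc : 0 < c) :
    c • u ∈ halfOpenCone u w := by
  have hw : det2 (c • u) w = c * det2 u w := by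
    simp only [det2, Pi.smul_apply, smul_eq_mul]; ring
  have hu : det2 u (c • u) = 0 := by
    simp only [det2, Pi.smul_apply, smul_eq_mul]; ring
  exact ⟨hw ▸ mul_pos hc h, hu.ge⟩

end EdgeForm

/-- The points of `X`, listed counterclockwise by `next`, are the vertices of a convex polygon
around the origin. -/
structure IsBoundaryCycle (X : Finset (Fin 2 → ℝ)) (next : (Fin 2 → ℝ) → Fin 2 → ℝ) : Prop where
  nonempty : X.Nonempty
  next_mem : ∀ ⦃u⦄, u ∈ X → next u ∈ X
  det2_next_pos : ∀ ⦃u⦄, u ∈ X → 0 < det2 u (next u)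
  edgeForm_lt_one : ∀ ⦃u⦄, u ∈ X → ∀ ⦃x⦄, x ∈ X → x ≠ u → x ≠ next u → edgeForm u (next u) x < 1

section Existence

variable {X : Finset (Fin 2 → ℝ)} {Δ : Set (Fin 2 → ℝ)} {u w x y : Fin 2 → ℝ}

lemma exists_det2_pos (h0 : 0 ∈ interior (convexHull ℝ (X : Set (Fin 2 → ℝ)))) (hy : y ≠ 0) :
    ∃ x ∈ X, 0 < det2 y x := by
  by_contra! h
  have hlin : IsLinearMap ℝ (det2 y) :=
    ⟨fun a b ↦ by simp only [det2, Pi.add_apply]; ring,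
      fun c a ↦ by simp only [det2, Pi.smul_apply, smul_eq_mul]; ring⟩
  have hhull : convexHull ℝ (X : Set (Fin 2 → ℝ)) ⊆ {x | det2 y x ≤ 0} :=
    convexHull_min h (convex_halfSpace_le hlin 0)
  have hle : ∀ x, det2 y x ≤ 0 := fun x ↦ by
    have habs := absorbent_nhds_zero (𝕜 := ℝ) (mem_interior_iff_mem_nhds.1 h0)
    obtain ⟨r, hr, z, hz, rfl⟩ := habs.gauge_set_nonempty (x := x)
    rw [hlin.map_smul, smul_eq_mul]
    exact mul_nonpos_of_nonneg_of_nonpos hr.le (hhull hz)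
  refine hy (eq_zero_of_forall_det2_eq_zero fun x ↦ (hle x).antisymm ?_)
  have := hle (-x)
  rw [det2_neg_right] at this
  linarith

lemma smul_notMem_of_mem_extremePoints (h0 : 0 ∈ Δ) (hu : u ∈ Δ.extremePoints ℝ) (hu0 : u ≠ 0)
    {c : ℝ} (hc : 1 < c) : c • u ∉ Δ := by
  intro h
  have hseg : u ∈ segment ℝ 0 (c • u) := by
    refine mem_segment_iff_wbtw.2 ⟨c⁻¹, ⟨by positivity, inv_le_one_of_one_le₀ hc.le⟩, ?_⟩
    simp [AffineMap.lineMap_apply, inv_smul_smul₀ (zero_lt_one.trans hc).ne']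
  rcases (mem_extremePoints_iff_forall_segment.1 hu).2 _ h0 _ h hseg with h | h
  · exact hu0 h.symm
  · exact hc.ne' (smul_left_injective ℝ hu0 (h.trans (one_smul ℝ u).symm))

/-- Among the points to the left of the ray of `u`, the edge leaving `u` ends at the one whose
slope, measured from `u` relative to an auxiliary line through `u`, is largest. -/
lemma exists_edgeForm_le_one (h0 : 0 ∈ Δ) (hconv : Convex ℝ Δ) (hX : (X : Set (Fin 2 → ℝ)) ⊆ Δ)
    (hu : u ∈ Δ.extremePoints ℝ) (hu0 : u ≠ 0) (hpos : ∃ x ∈ X, 0 < det2 u x) :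
    ∃ w ∈ X, 0 < det2 u w ∧ ∀ x ∈ X, edgeForm u w x ≤ 1 := by
  classical
  obtain ⟨a, haX, ha⟩ := hpos
  obtain ⟨w, hw, hmax⟩ := (X.filter (0 < det2 u ·)).exists_max_image
    (fun x ↦ (edgeForm u a x - 1) / det2 u x) ⟨a, Finset.mem_filter.2 ⟨haX, ha⟩⟩
  obtain ⟨hwX, hw⟩ := Finset.mem_filter.1 hw
  refine ⟨w, hwX, hw, fun x hx ↦ ?_⟩
  rcases lt_or_ge 0 (det2 u x) with hux | hux
  · have hslope := hmax x (Finset.mem_filter.2 ⟨hx, hux⟩)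
    rw [div_le_div_iff₀ hux hw] at hslope
    have h := edgeForm_mul_det2 u a u w x
    rw [edgeForm_left ha.ne'] at h
    rw [edgeForm, div_le_one hw]
    linarith
  · by_contra! hgt
    rw [edgeForm, one_lt_div hw] at hgt
    have hd : 0 < det2 u w - det2 u x := by linarith
    refine smul_notMem_of_mem_extremePoints h0 hu hu0 ((one_lt_div hd).2 (by linarith)) ?_
      (c := det2 x w / (det2 u w - det2 u x))
    have hsum : (det2 x w / (det2 u w - det2 u x)) • u = (det2 u w / (det2 u w - det2 u x)) • x +
        (-det2 u x / (det2 u w - det2 u x)) • w := by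
      refine smul_right_injective _ hd.ne' ?_
      have hc := det2_smul_cyclic u x w
      rw [det2_swap u w, neg_smul] at hc
      simp only [smul_add, smul_smul, mul_div_cancel₀ _ hd.ne', neg_smul]
      linear_combination (exp := 1) hc
    rw [hsum]
    refine hconv (hX hx) (hX hwX) (by positivity) (div_nonneg (by linarith) hd.le) ?_
    rw [← add_div, ← sub_eq_add_neg, div_self hd.ne']

lemma eq_or_eq_of_edgeForm_eq_one (hu : u ∈ Δ.extremePoints ℝ) (hw : w ∈ Δ.extremePoints ℝ)
    (hx : x ∈ Δ.extremePoints ℝ) (huw : 0 < det2 u w) (h : edgeForm u w x = 1) :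
    x = u ∨ x = w := by
  have hne := ne_of_det2_pos huw
  have hline : AffineMap.lineMap u w (det2 u x / det2 u w) = x := by
    rw [edgeForm, add_div] at h
    rw [AffineMap.lineMap_apply_module, ← eq_sub_of_add_eq h]
    exact (eq_smul_add_smul_of_det2_ne_zero huw.ne' x).symm
  have hcol : Collinear ℝ {x, u, w} := collinear_insert_of_mem_affineSpan_pair
    (hline ▸ AffineMap.lineMap_mem_affineSpan_pair _ _ _)
  simp only [mem_extremePoints_iff_forall_segment, mem_segment_iff_wbtw] at hu hw hx
  rcases hcol.wbtw_or_wbtw_or_wbtw with hb | hb | hb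
  · exact (hu.2 x hx.1 w hw.1 hb).imp id fun h ↦ absurd h hne.symm
  · exact ((hw.2 u hu.1 x hx.1 hb).resolve_left hne).symm ▸ Or.inr rfl
  · exact (hx.2 w hw.1 u hu.1 hb).symm.imp Eq.symm Eq.symm

theorem exists_isBoundaryCycle (h0 : 0 ∈ interior (convexHull ℝ (X : Set (Fin 2 → ℝ))))
    (hX : (X : Set (Fin 2 → ℝ)) ⊆ (convexHull ℝ (X : Set (Fin 2 → ℝ))).extremePoints ℝ) :
    ∃ next, IsBoundaryCycle X next := by
  have hedge : ∀ u ∈ X, ∃ w ∈ X, 0 < det2 u w ∧ ∀ x ∈ X, edgeForm u w x ≤ 1 := fun u hu ↦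
    have hu0 : u ≠ 0 :=
      ((disjoint_interior_extremePoints _).ne_of_mem h0 (hX hu)).symm
    exists_edgeForm_le_one (interior_subset h0) (convex_convexHull ℝ _) (subset_convexHull ℝ _)
      (hX hu) hu0 (exists_det2_pos h0 hu0)
  choose! next hmem hpos hle using hedge
  refine ⟨next, ?_, hmem, hpos, fun u hu x hx hxu hxw ↦ (hle u hu x hx).lt_of_ne fun h ↦ ?_⟩
  · exact Finset.coe_nonempty.1 (convexHull_nonempty_iff.1 ⟨0, interior_subset h0⟩)
  · exact (eq_or_eq_of_edgeForm_eq_one (hX hu) (hX (hmem u hu)) (hX hx) (hpos u hu) h).elim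
      hxu hxw

end Existence

namespace IsBoundaryCycle

section Cone

variable {X : Finset (Fin 2 → ℝ)} {next : (Fin 2 → ℝ) → Fin 2 → ℝ} {u u' x y : Fin 2 → ℝ}

lemma edgeForm_le_one (h : IsBoundaryCycle X next) (hu : u ∈ X) (hx : x ∈ X) :
    edgeForm u (next u) x ≤ 1 := by
  by_cases hxu : x = u
  · rw [hxu, edgeForm_left (h.det2_next_pos hu).ne']
  by_cases hxw : x = next u
  · rw [hxw, edgeForm_right (h.det2_next_pos hu).ne']
  exact (h.edgeForm_lt_one hu hx hxu hxw).le

lemma next_ne (h : IsBoundaryCycle X next) (hu : u ∈ X) : next u ≠ u :=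
  (ne_of_det2_pos (h.det2_next_pos hu)).symm

lemma next_next_ne (h : IsBoundaryCycle X next) (hu : u ∈ X) : next (next u) ≠ u := fun he ↦ by
  have h1 := h.det2_next_pos (h.next_mem hu)
  rw [he, det2_swap u] at h1
  linarith [h.det2_next_pos hu]

lemma injOn_next (h : IsBoundaryCycle X next) : Set.InjOn next X := fun u hu u' hu' he ↦ by
  by_contra hne
  have h1 := h.edgeForm_lt_one hu hu' (Ne.symm hne) (he ▸ (h.next_ne hu').symm)
  have h2 := h.edgeForm_lt_one hu' hu hne (he ▸ (h.next_ne hu).symm)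
  rw [edgeForm, div_lt_one (h.det2_next_pos hu)] at h1
  rw [edgeForm, div_lt_one (h.det2_next_pos hu'), det2_swap u u', ← he] at h2
  linarith

lemma surjOn_next (h : IsBoundaryCycle X next) : Set.SurjOn next X X :=
  Finset.surjOn_of_injOn_of_card_le _ h.next_mem h.injOn_next le_rfl

lemma sum_comp_next (h : IsBoundaryCycle X next) (f : (Fin 2 → ℝ) → ℝ) :
    ∑ u ∈ X, f (next u) = ∑ u ∈ X, f u :=
  Finset.sum_nbij next h.next_mem h.injOn_next h.surjOn_next fun _ _ ↦ rfl

lemma edgeForm_le_edgeForm (h : IsBoundaryCycle X next) (hu : u ∈ X) (hu' : u' ∈ X)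
    (hyw : 0 ≤ det2 y (next u)) (huy : 0 ≤ det2 u y) :
    edgeForm u' (next u') y ≤ edgeForm u (next u) y := by
  rw [edgeForm.eq_1 u, le_div_iff₀ (h.det2_next_pos hu), edgeForm_mul_det2]
  exact add_le_add (mul_le_of_le_one_right hyw (h.edgeForm_le_one hu' hu))
    (mul_le_of_le_one_right huy (h.edgeForm_le_one hu' (h.next_mem hu)))

/-- The edge whose form is largest at `y` is the one facing `y`, as comparing it with its two
neighbours shows. -/
lemma exists_mem_halfOpenCone (h : IsBoundaryCycle X next) (hy : y ≠ 0) :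
    ∃ u ∈ X, y ∈ halfOpenCone u (next u) := by
  obtain ⟨u, hu, hmax⟩ := X.exists_max_image (fun u ↦ edgeForm u (next u) y) h.nonempty
  obtain ⟨p, hp, rfl⟩ := h.surjOn_next hu
  set u := next p
  set w := next u
  have hw := h.next_mem hu
  have hd : 0 < det2 u w := h.det2_next_pos hu
  have hle : ∀ u' ∈ X, edgeForm u' (next u') y * det2 u w ≤ det2 y w + det2 u y :=
    fun u' hu' ↦ (le_div_iff₀ hd).1 (hmax u' hu')
  have hyw : 0 ≤ det2 y w := by
    have h1 := hle w hw
    rw [edgeForm_mul_det2, edgeForm_left (h.det2_next_pos hw).ne', mul_one,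
      add_le_add_iff_right] at h1
    have h2 := h.edgeForm_lt_one hw hu (h.next_ne hu).symm (h.next_next_ne hu).symm
    exact (mul_nonneg_iff_of_pos_left (sub_pos.2 h2)).1 (by linarith)
  have huy : 0 ≤ det2 u y := by
    have h1 := hle p hp
    rw [edgeForm_mul_det2, edgeForm_right (h.det2_next_pos hp).ne', mul_one,
      add_le_add_iff_left] at h1
    have h2 := h.edgeForm_lt_one hp hw (h.next_next_ne hp) (h.next_ne hu)
    exact (mul_nonneg_iff_of_pos_left (sub_pos.2 h2)).1 (by linarith)
  rcases hyw.lt_or_eq with hyw | hyw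
  · exact ⟨u, hu, hyw, huy⟩
  have hyc := eq_smul_add_smul_of_det2_ne_zero hd.ne' y
  rw [← hyw, zero_div, zero_smul, zero_add] at hyc
  have hc : 0 < det2 u y / det2 u w :=
    (div_nonneg huy hd.le).lt_of_ne fun hc ↦ hy (by rw [hyc, ← hc, zero_smul])
  exact ⟨w, hw, hyc ▸ smul_mem_halfOpenCone (h.det2_next_pos hw) hc⟩

theorem existsUnique_mem_halfOpenCone (h : IsBoundaryCycle X next) (hy : y ≠ 0) :
    ∃! u, u ∈ X ∧ y ∈ halfOpenCone u (next u) := by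
  obtain ⟨u, hu, hyu⟩ := h.exists_mem_halfOpenCone hy
  refine ⟨u, ⟨hu, hyu⟩, fun u' ⟨hu', hyu'⟩ ↦ by_contra fun hne ↦ ?_⟩
  have key : ∀ ⦃u⦄, u ∈ X → ∀ ⦃u'⦄, u' ∈ X → y ∈ halfOpenCone u (next u) →
      y ∈ halfOpenCone u' (next u') → u ≠ u' → u = next u' := fun u hu u' hu' hyu hyu' hne ↦ by
    by_contra hnext
    have hlt := h.edgeForm_lt_one hu' hu hne hnext
    have hle := h.edgeForm_le_edgeForm hu' hu hyu'.1.le hyu'.2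
    rw [edgeForm.eq_1 u, div_le_iff₀ (h.det2_next_pos hu), edgeForm_mul_det2] at hle
    have h1 := mul_lt_of_lt_one_right hyu.1 hlt
    have h2 := mul_le_of_le_one_right hyu.2 (h.edgeForm_le_one hu' (h.next_mem hu))
    linarith
  refine h.next_next_ne hu ?_
  rw [← key hu' hu hyu' hyu hne]
  exact (key hu hu' hyu hyu' (Ne.symm hne)).symm

end Cone

end IsBoundaryCycle

/-- The directions `(1, k)` with `k` an integer different from all slopes will do. -/
lemma exists_isCoprime_forall_det2_ne_zero {X : Finset (Fin 2 → ℝ)}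
    (hX : ∀ u ∈ X, u ≠ 0) :
    ∃ e : Fin 2 → ℤ, IsCoprime (e 0) (e 1) ∧ ∀ u ∈ X, det2 (coeLat e) u ≠ 0 := by
  classical
  have hinf : (Set.range ((↑) : ℤ → ℝ)).Infinite :=
    Set.infinite_range_of_injective Int.cast_injective
  obtain ⟨_, ⟨k, rfl⟩, hk⟩ := hinf.exists_notMem_finset (X.image fun u ↦ u 1 / u 0)
  refine ⟨![1, k], isCoprime_one_left, fun u hu hdet ↦ ?_⟩
  simp only [det2, coeLat, Matrix.cons_val_zero, Matrix.cons_val_one, Int.cast_one, one_mul] at hdet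
  by_cases hu0 : u 0 = 0
  · refine hX u hu (funext fun i ↦ ?_)
    fin_cases i
    · exact hu0
    · simpa [hu0] using hdet
  · exact hk (Finset.mem_image.2 ⟨u, hu, (div_eq_iff hu0).2 (by linarith)⟩)

namespace IsBoundaryCycle

section Sums

variable {X : Finset (Fin 2 → ℝ)} {next : (Fin 2 → ℝ) → Fin 2 → ℝ} {e : Fin 2 → ℝ}

lemma ne_zero_of_mem (h : IsBoundaryCycle X next) {u : Fin 2 → ℝ} (hu : u ∈ X) : u ≠ 0 := by
  rintro rfl
  simpa [det2] using h.det2_next_pos hu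

lemma sum_indicator_halfOpenCone (h : IsBoundaryCycle X next) (he : e ≠ 0) :
    ∑ u ∈ X, (halfOpenCone u (next u)).indicator (1 : (Fin 2 → ℝ) → ℝ) e = 1 := by
  classical
  simp only [Set.indicator_apply, Pi.one_apply, Finset.sum_boole]
  rw [Nat.cast_eq_one, Finset.card_eq_one_iff_existsUnique]
  simpa only [Finset.mem_filter] using h.existsUnique_mem_halfOpenCone he

lemma sum_sign (h : IsBoundaryCycle X next) (he : ∀ u ∈ X, det2 e u ≠ 0) :
    ∑ u ∈ X, (SignType.sign (det2 e u * det2 e (next u)) : ℝ) = X.card - 4 := by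
  classical
  have he0 : e ≠ 0 := by
    rintro rfl
    obtain ⟨u, hu⟩ := h.nonempty
    exact he u hu (by simp [det2])
  have key : ∀ u ∈ X, (SignType.sign (det2 e u * det2 e (next u)) : ℝ) =
      1 - 2 * (halfOpenCone u (next u)).indicator (1 : (Fin 2 → ℝ) → ℝ) e -
        2 * (halfOpenCone u (next u)).indicator (1 : (Fin 2 → ℝ) → ℝ) (-e) := fun u hu ↦ by
    simp only [Set.indicator_apply, halfOpenCone, Set.mem_ofPred_eq, Pi.one_apply, det2_neg_left,
      det2_neg_right, det2_swap e u, neg_neg, sign_mul]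
    rcases (he u hu).lt_or_gt with hu | hu <;>
      rcases (he _ (h.next_mem ‹_›)).lt_or_gt with hw | hw <;>
      simp [hu, hw, hu.le, hw.not_gt, hu.not_ge] <;> norm_num
  rw [Finset.sum_congr rfl key, Finset.sum_sub_distrib, Finset.sum_sub_distrib, ← Finset.mul_sum,
    ← Finset.mul_sum, h.sum_indicator_halfOpenCone he0,
    h.sum_indicator_halfOpenCone (neg_ne_zero.2 he0), Finset.sum_const, nsmul_one]
  ring

lemma sum_det2_next_div (h : IsBoundaryCycle X next) (he : ∀ u ∈ X, det2 e u ≠ 0) :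
    ∑ u ∈ X, det2 u (next u) / (det2 e u * det2 e (next u)) = 0 := by
  obtain ⟨f, hf⟩ := h.nonempty
  have key : ∀ u ∈ X, det2 u (next u) / (det2 e u * det2 e (next u)) =
      det2 f (next u) / det2 e (next u) / det2 e f - det2 f u / det2 e u / det2 e f := fun u hu ↦ by
    have := he f hf
    have := he u hu
    have := he _ (h.next_mem hu)
    field_simp
    linear_combination det2_mul_det2 e f u (next u)
  rw [Finset.sum_congr rfl key, Finset.sum_sub_distrib,
    h.sum_comp_next fun u ↦ det2 f u / det2 e u / det2 e f, sub_self]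

lemma sum_det2_next_next_div (h : IsBoundaryCycle X next) (he : ∀ u ∈ X, det2 e u ≠ 0) :
    ∑ u ∈ X, det2 u (next (next u)) / (det2 u (next u) * det2 (next u) (next (next u))) =
      ∑ u ∈ X, (det2 e u ^ 2 + det2 e (next u) ^ 2) /
        (det2 u (next u) * det2 e u * det2 e (next u)) := by
  set g : (Fin 2 → ℝ) → ℝ := fun u ↦ det2 e (next u) / (det2 u (next u) * det2 e u)
  have key : ∀ u ∈ X,
      det2 u (next (next u)) / (det2 u (next u) * det2 (next u) (next (next u))) =
        det2 e u / (det2 u (next u) * det2 e (next u)) + g (next u) := fun u hu ↦ by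
    have := he _ (h.next_mem hu)
    have := (h.det2_next_pos hu).ne'
    have := (h.det2_next_pos (h.next_mem hu)).ne'
    simp only [g]
    field_simp
    simp only [det2]; ring
  rw [Finset.sum_congr rfl key, Finset.sum_add_distrib, h.sum_comp_next g,
    ← Finset.sum_add_distrib]
  refine Finset.sum_congr rfl fun u hu ↦ ?_
  have := he u hu
  have := he _ (h.next_mem hu)
  have := (h.det2_next_pos hu).ne'
  simp only [g]
  field_simp

end Sums

section Lattice

variable {X : Finset (Fin 2 → ℝ)} {next : (Fin 2 → ℝ) → Fin 2 → ℝ}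
  {ι : (Fin 2 → ℝ) → Fin 2 → ℤ}

lemma twelve_mul_sum_dedekindSum {N : ℕ} [NeZero N] (h : IsBoundaryCycle X next)
    (hι : ∀ u ∈ X, coeLat (ι u) = u) (hprim : ∀ u ∈ X, IsCoprime (ι u 0) (ι u 1))
    {e : Fin 2 → ℤ} (he : IsCoprime (e 0) (e 1)) (he0 : ∀ u ∈ X, det2 (coeLat e) u ≠ 0)
    (hN : ∀ u ∈ X, det2 (ι u) (ι (next u)) * det2 e (ι u) * det2 e (ι (next u)) ∣ N) :
    12 * ∑ u ∈ X, dedekindSum N (ι u) (ι (next u)) = 12 - 3 * X.card +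
      ∑ u ∈ X, det2 u (next (next u)) / (det2 u (next u) * det2 (next u) (next (next u))) := by
  have key : ∀ u ∈ X, dedekindSum N (ι u) (ι (next u)) =
      dedekindSum N e (ι (next u)) - dedekindSum N e (ι u)
        - SignType.sign (det2 (coeLat e) u * det2 (coeLat e) (next u)) / 4
        + 1 / 12 * (det2 u (next u) / (det2 (coeLat e) u * det2 (coeLat e) (next u)))
        + 1 / 12 * ((det2 (coeLat e) u ^ 2 + det2 (coeLat e) (next u) ^ 2) /
          (det2 u (next u) * det2 (coeLat e) u * det2 (coeLat e) (next u))) := fun u hu ↦ by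
    have hw := h.next_mem hu
    obtain ⟨q, hq⟩ := hN u hu
    have h3 := dedekindSum_three_term he (hprim u hu) (hprim _ hw) rfl rfl rfl (q := -q) (N := N)
      (by rw [det2_swap e, hq]; ring)
    have hm := h.det2_next_pos hu
    have h1 := he0 u hu
    have h2 := he0 _ hw
    have hsign : (SignType.sign (det2 u (next u) * -det2 (coeLat e) (next u) * det2 (coeLat e) u) :
        ℝ) = -SignType.sign (det2 (coeLat e) u * det2 (coeLat e) (next u)) := by
      simp only [sign_mul, Left.sign_neg, sign_pos hm]
      push_cast [SignType.coe_one]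
      ring
    simp only [← det2_coeLat, hι u hu, hι _ hw, det2_swap (coeLat e) (next u), hsign,
      dedekindSum_swap e (ι (next u))] at h3
    have := hm.ne'
    calc dedekindSum N (ι u) (ι (next u))
        = dedekindSum N e (ι (next u)) - dedekindSum N e (ι u) +
          (-SignType.sign (det2 (coeLat e) u * det2 (coeLat e) (next u)) / 4 -
            (det2 u (next u) ^ 2 + (-det2 (coeLat e) (next u)) ^ 2 + det2 (coeLat e) u ^ 2) /
              (12 * (det2 u (next u) * -det2 (coeLat e) (next u) * det2 (coeLat e) u))) := by
          rw [← h3]; ring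
      _ = _ := by field_simp; ring
  rw [Finset.sum_congr rfl key]
  simp only [Finset.sum_add_distrib, Finset.sum_sub_distrib, ← Finset.sum_div, ← Finset.mul_sum]
  rw [h.sum_comp_next fun u ↦ dedekindSum N e (ι u), h.sum_sign he0, h.sum_det2_next_div he0,
    h.sum_det2_next_next_div he0]
  ring

theorem twelve_mul_sum_coneSum (h : IsBoundaryCycle X next)
    (hι : ∀ u ∈ X, coeLat (ι u) = u) (hprim : ∀ u ∈ X, IsCoprime (ι u 0) (ι u 1)) :
    12 * ∑ u ∈ X, coneSum (ι u) (ι (next u)) =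
      ∑ u ∈ X, det2 u (next u) + ∑ u ∈ X, 2 / det2 u (next u) - 12 -
      ∑ u ∈ X, det2 u (next (next u)) / (det2 u (next u) * det2 (next u) (next (next u))) := by
  obtain ⟨e, he, he0⟩ := exists_isCoprime_forall_det2_ne_zero fun u hu ↦ h.ne_zero_of_mem hu
  set a : (Fin 2 → ℝ) → ℤ := fun u ↦
    det2 (ι u) (ι (next u)) * det2 e (ι u) * det2 e (ι (next u))
  have ha : ∀ u ∈ X, a u ≠ 0 := fun u hu ↦ by
    have hw := h.next_mem hu
    rw [← Int.cast_ne_zero (α := ℝ)]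
    simpa [a, ← det2_coeLat, hι u hu, hι _ hw, he0 u hu, he0 _ hw] using
      (h.det2_next_pos hu).ne'
  set N := (∏ u ∈ X, a u).natAbs
  have : NeZero N := ⟨by simpa [N, Finset.prod_eq_zero_iff] using ha⟩
  have hN : ∀ u ∈ X, a u ∣ N := fun u hu ↦ Int.dvd_natAbs.2 (Finset.dvd_prod_of_mem a hu)
  have key : ∀ u ∈ X, 12 * coneSum (ι u) (ι (next u)) =
      det2 u (next u) - 3 + 2 / det2 u (next u) - 12 * dedekindSum N (ι u) (ι (next u)) :=
    fun u hu ↦ by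
    have hm : ((det2 (ι u) (ι (next u)) : ℤ) : ℝ) = det2 u (next u) := by
      rw [← det2_coeLat, hι u hu, hι _ (h.next_mem hu)]
    have hpos : 0 < det2 (ι u) (ι (next u)) := Int.cast_pos.1 (hm ▸ h.det2_next_pos hu)
    obtain ⟨m, hm'⟩ := Int.eq_ofNat_of_zero_le hpos.le
    have : NeZero m := ⟨by rintro rfl; exact hpos.ne' hm'⟩
    obtain ⟨M, hM⟩ := ((Dvd.intro _ (mul_assoc _ _ _).symm).trans (hN u hu) :
      det2 (ι u) (ι (next u)) ∣ N)
    rw [coneSum_eq (hprim u hu) (hprim _ (h.next_mem hu)) hm' (hm' ▸ hM.symm), ← hm, hm',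
      Int.cast_natCast]
  rw [Finset.mul_sum, Finset.sum_congr rfl key, Finset.sum_sub_distrib, ← Finset.mul_sum,
    h.twelve_mul_sum_dedekindSum hι hprim he he0 hN, Finset.sum_add_distrib,
    Finset.sum_sub_distrib, Finset.sum_const, nsmul_eq_mul]
  ring

end Lattice

end IsBoundaryCycle

section Area

lemma volume_setOf_add_le {c : ℝ} (hc : 0 ≤ c) :
    volume {p : Fin 2 → ℝ | 0 < p 0 ∧ 0 ≤ p 1 ∧ p 0 + p 1 ≤ c} = ENNReal.ofReal (c ^ 2 / 2) := by
  set S : Set (ℝ × ℝ) := {p | 0 < p.1 ∧ 0 ≤ p.2 ∧ p.1 + p.2 ≤ c}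
  have hS : MeasurableSet S := by measurability
  have hslice : ∀ x, volume (Prod.mk x ⁻¹' S) =
      (Set.Ioc 0 c).indicator (fun x ↦ ENNReal.ofReal (c - x)) x := fun x ↦ by
    by_cases hx : x ∈ Set.Ioc 0 c
    · have : Prod.mk x ⁻¹' S = Set.Icc 0 (c - x) := by
        ext y
        simp [S, hx.1, le_sub_iff_add_le']
      rw [this, Real.volume_Icc, sub_zero, Set.indicator_of_mem hx]
    · have : Prod.mk x ⁻¹' S = ∅ := Set.eq_empty_of_forall_notMem fun y hy ↦
        hx ⟨hy.1, by linarith [hy.2.1, hy.2.2]⟩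
      rw [this, measure_empty, Set.indicator_of_notMem hx]
  have hintegral : ∫ x in (0 : ℝ)..c, (c - x) = c ^ 2 / 2 := by
    rw [intervalIntegral.integral_sub (by simp) (by simp), intervalIntegral.integral_const,
      integral_id, smul_eq_mul]
    ring
  change volume (MeasurableEquiv.finTwoArrow ⁻¹' S) = _
  rw [(volume_preserving_finTwoArrow ℝ).measure_preimage hS.nullMeasurableSet,
    Measure.volume_eq_prod, Measure.prod_apply hS]
  simp only [hslice]
  rw [lintegral_indicator measurableSet_Ioc, ← ofReal_integral_eq_lintegral_ofReal,
    ← intervalIntegral.integral_of_le hc, hintegral]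
  · exact (by fun_prop : Continuous fun x ↦ c - x).integrableOn_Ioc
  · exact (ae_restrict_mem measurableSet_Ioc).mono fun x hx ↦ sub_nonneg.2 hx.2

variable {u w : Fin 2 → ℝ}

lemma measurableSet_halfOpenTriangle (u w : Fin 2 → ℝ) :
    MeasurableSet (halfOpenTriangle u w) := by
  have hl : Measurable fun y ↦ det2 y w := by unfold det2; fun_prop
  have hr : Measurable (det2 u) := by unfold det2; fun_prop
  exact ((measurableSet_lt measurable_const hl).inter (measurableSet_le measurable_const hr)).inter
    (measurableSet_le ((hl.add hr).div_const _) measurable_const)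

lemma volume_halfOpenTriangle (h : 0 < det2 u w) :
    volume (halfOpenTriangle u w) = ENNReal.ofReal (det2 u w / 2) := by
  set f := Matrix.toLin' !![w 1, -w 0; -u 1, u 0]
  have hf : LinearMap.det f = det2 u w := by
    rw [LinearMap.det_toLin', Matrix.det_fin_two_of, det2]; ring
  have hpre : halfOpenTriangle u w =
      f ⁻¹' {p | 0 < p 0 ∧ 0 ≤ p 1 ∧ p 0 + p 1 ≤ det2 u w} := by
    ext y
    have h0 : f y 0 = det2 y w := by
      simp only [f, det2, Matrix.toLin'_apply, Matrix.mulVec, Matrix.of_apply,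
        dotProduct, Fin.sum_univ_two, Matrix.cons_val_zero, Matrix.cons_val_one]
      ring
    have h1 : f y 1 = det2 u y := by
      simp only [f, det2, Matrix.toLin'_apply, Matrix.mulVec, Matrix.of_apply,
        dotProduct, Fin.sum_univ_two, Matrix.cons_val_zero, Matrix.cons_val_one]
      ring
    simp only [halfOpenTriangle, halfOpenCone, edgeForm, Set.mem_preimage, Set.mem_ofPred_eq, h0,
      h1, div_le_one h, and_assoc]
  rw [hpre, Measure.addHaar_preimage_linearMap _ (hf ▸ h.ne'), hf, volume_setOf_add_le h.le,
    ← ENNReal.ofReal_mul (abs_nonneg _), abs_of_pos (inv_pos.2 h)]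
  congr 1
  field_simp

end Area

namespace IsBoundaryCycle

section Polygon

variable {X : Finset (Fin 2 → ℝ)} {next : (Fin 2 → ℝ) → Fin 2 → ℝ} {P : Set (Fin 2 → ℝ)}
  {u u' y : Fin 2 → ℝ}

lemma eq_of_mem_halfOpenTriangle (h : IsBoundaryCycle X next) (hu : u ∈ X) (hu' : u' ∈ X)
    (hy : y ∈ halfOpenTriangle u (next u)) (hy' : y ∈ halfOpenTriangle u' (next u')) : u = u' := by
  have hy0 : y ≠ 0 := fun h0 ↦ by simpa [h0, det2] using hy.1.1
  exact (h.existsUnique_mem_halfOpenCone hy0).unique ⟨hu, hy.1⟩ ⟨hu', hy'.1⟩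

lemma eq_insert_biUnion_halfOpenTriangle (h : IsBoundaryCycle X next) (h0 : 0 ∈ P)
    (hP : ∀ u ∈ X, ∀ y ∈ halfOpenCone u (next u), y ∈ P ↔ edgeForm u (next u) y ≤ 1) :
    P = insert 0 (⋃ u ∈ X, halfOpenTriangle u (next u)) := by
  ext y
  simp only [Set.mem_insert_iff, Set.mem_iUnion, exists_prop]
  refine ⟨fun hy ↦ or_iff_not_imp_left.2 fun hy0 ↦ ?_, ?_⟩
  · obtain ⟨u, hu, hyu⟩ := h.exists_mem_halfOpenCone hy0
    exact ⟨u, hu, hyu, (hP u hu y hyu).1 hy⟩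
  · rintro (rfl | ⟨u, hu, hyu, hle⟩)
    · exact h0
    · exact (hP u hu y hyu).2 hle

lemma v2_insert_biUnion (h : IsBoundaryCycle X next) :
    v2 (insert 0 (⋃ u ∈ X, halfOpenTriangle u (next u))) = ∑ u ∈ X, det2 u (next u) := by
  have hvol : ∀ u ∈ X, volume (halfOpenTriangle u (next u)) =
      ENNReal.ofReal (det2 u (next u) / 2) := fun u hu ↦
    volume_halfOpenTriangle (h.det2_next_pos hu)
  rw [v2, measure_congr (insert_ae_eq_self _ _), measure_biUnion_finset
    (fun u hu u' hu' hne ↦ Set.disjoint_left.2 fun y hy hy' ↦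
      hne (h.eq_of_mem_halfOpenTriangle hu hu' hy hy'))
    fun u _ ↦ measurableSet_halfOpenTriangle u (next u),
    Finset.sum_congr rfl hvol, ← ENNReal.ofReal_sum_of_nonneg, ENNReal.toReal_ofReal,
    ← Finset.sum_div, mul_div_cancel₀ _ two_ne_zero]
  · exact Finset.sum_nonneg fun u hu ↦ (half_pos (h.det2_next_pos hu)).le
  · exact fun u hu ↦ (half_pos (h.det2_next_pos hu)).le

end Polygon

section Hull

variable {X : Finset (Fin 2 → ℝ)} {next : (Fin 2 → ℝ) → Fin 2 → ℝ} {u y : Fin 2 → ℝ}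

lemma edgeForm_le_one_of_mem_convexHull (h : IsBoundaryCycle X next) (hu : u ∈ X)
    (hy : y ∈ convexHull ℝ (X : Set (Fin 2 → ℝ))) : edgeForm u (next u) y ≤ 1 :=
  convexHull_min (fun _ hx ↦ h.edgeForm_le_one hu hx)
    (convex_halfSpace_le (isLinearMap_edgeForm u (next u)) 1) hy

lemma gauge_convexHull (h : IsBoundaryCycle X next)
    (h0 : 0 ∈ interior (convexHull ℝ (X : Set (Fin 2 → ℝ)))) (hu : u ∈ X)
    (hy : y ∈ halfOpenCone u (next u)) :
    gauge (convexHull ℝ (X : Set (Fin 2 → ℝ))) y = edgeForm u (next u) y := by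
  have habs := absorbent_nhds_zero (𝕜 := ℝ) (mem_interior_iff_mem_nhds.1 h0)
  have hd := h.det2_next_pos hu
  have hgauge : ∀ x ∈ X, gauge (convexHull ℝ (X : Set (Fin 2 → ℝ))) x ≤ 1 := fun x hx ↦
    gauge_le_one_of_mem (subset_convexHull ℝ _ hx)
  refine le_antisymm ?_ (le_of_not_gt fun hlt ↦ ?_)
  · have hyw := div_nonneg hy.1.le hd.le
    have huy := div_nonneg hy.2 hd.le
    nth_rw 1 [eq_smul_add_smul_of_det2_ne_zero hd.ne' y]
    refine (gauge_add_le (convex_convexHull ℝ _) habs _ _).trans ?_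
    rw [gauge_smul_of_nonneg hyw, gauge_smul_of_nonneg huy, edgeForm, add_div]
    exact add_le_add (mul_le_of_le_one_right hyw (hgauge u hu))
      (mul_le_of_le_one_right huy (hgauge _ (h.next_mem hu)))
  · obtain ⟨b, hb, hlt, z, hz, rfl⟩ := exists_lt_of_gauge_lt habs hlt
    simp only [(isLinearMap_edgeForm u (next u)).map_smul, smul_eq_mul] at hlt
    exact hlt.not_ge (mul_le_of_le_one_right hb.le (h.edgeForm_le_one_of_mem_convexHull hu hz))

lemma convexHull_eq (h : IsBoundaryCycle X next)
    (h0 : 0 ∈ interior (convexHull ℝ (X : Set (Fin 2 → ℝ)))) :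
    convexHull ℝ (X : Set (Fin 2 → ℝ)) = insert 0 (⋃ u ∈ X, halfOpenTriangle u (next u)) := by
  refine h.eq_insert_biUnion_halfOpenTriangle (interior_subset h0) fun u hu y hy ↦ ?_
  rw [← h.gauge_convexHull h0 hu hy, gauge_le_one_iff_mem_closure (convex_convexHull ℝ _)
    (mem_interior_iff_mem_nhds.1 h0), (X.finite_toSet.isClosed_convexHull ℝ).closure_eq]

end Hull

end IsBoundaryCycle

section LatticePoints

lemma isometry_coeLat {d : ℕ} : Isometry (coeLat (d := d)) :=
  Isometry.piMap (fun _ ↦ ((↑) : ℤ → ℝ)) fun _ ↦ .of_dist_eq Int.dist_cast_real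

lemma finite_latticePoints {d : ℕ} {S : Set (Fin d → ℝ)} (hS : Bornology.IsBounded S) :
    (latticePoints S).Finite :=
  (Metric.isCompact_of_isClosed_isBounded (isClosed_discrete _)
    (isometry_coeLat.antilipschitz.isBounded_preimage hS)).finite_of_discrete

end LatticePoints

namespace IsBoundaryCycle

section LatticeSum

variable {X : Finset (Fin 2 → ℝ)} {next : (Fin 2 → ℝ) → Fin 2 → ℝ}
  {ι : (Fin 2 → ℝ) → Fin 2 → ℤ}

lemma finsum_latticePoints_convexHull (h : IsBoundaryCycle X next)
    (h0 : 0 ∈ interior (convexHull ℝ (X : Set (Fin 2 → ℝ)))) (hι : ∀ u ∈ X, coeLat (ι u) = u) :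
    ∑ᶠ n ∈ latticePoints (convexHull ℝ (X : Set (Fin 2 → ℝ))),
        (1 - gauge (convexHull ℝ (X : Set (Fin 2 → ℝ))) (coeLat n)) ^ 2 =
      1 + ∑ u ∈ X, coneSum (ι u) (ι (next u)) := by
  have hlat : latticePoints (convexHull ℝ (X : Set (Fin 2 → ℝ))) =
      insert 0 (⋃ u ∈ (X : Set (Fin 2 → ℝ)), latticePoints (halfOpenTriangle u (next u))) := by
    ext n
    have hzero : coeLat n = 0 ↔ n = 0 := by simp [funext_iff, coeLat]
    rw [latticePoints, Set.mem_ofPred_eq, h.convexHull_eq h0]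
    simp [hzero, latticePoints]
  have hfin := finite_latticePoints (isBounded_convexHull.2 X.finite_toSet.isBounded)
  rw [hlat] at hfin ⊢
  have hU := hfin.subset (Set.subset_insert _ _)
  have h0U : 0 ∉ ⋃ u ∈ (X : Set (Fin 2 → ℝ)), latticePoints (halfOpenTriangle u (next u)) := by
    simp [latticePoints, halfOpenTriangle, halfOpenCone, det2, coeLat]
  rw [finsum_mem_insert _ h0U hU, finsum_mem_biUnion, finsum_mem_coe_finset]
  · congr 1
    · simp [show coeLat (0 : Fin 2 → ℤ) = 0 by ext; simp [coeLat]]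
    · refine Finset.sum_congr rfl fun u hu ↦ ?_
      rw [coneSum, hι u hu, hι _ (h.next_mem hu)]
      exact finsum_mem_congr rfl fun n hn ↦ by rw [h.gauge_convexHull h0 hu hn.1]
  · exact fun u hu u' hu' hne ↦ Set.disjoint_left.2 fun n hn hn' ↦
      hne (h.eq_of_mem_halfOpenTriangle hu hu' hn hn')
  · exact X.finite_toSet
  · exact fun u hu ↦ hU.subset (Set.subset_biUnion_of_mem
      (u := fun u ↦ latticePoints (halfOpenTriangle u (next u))) hu)

end LatticeSum

end IsBoundaryCycle

section Dual

/-- The vertex of the dual polygon corresponding to the edge from `u` to `w`: the vector whose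
pairing with `y` is `-edgeForm u w y`. -/
def dualVertex (u w : Fin 2 → ℝ) : Fin 2 → ℝ := (det2 u w)⁻¹ • ![u 1 - w 1, w 0 - u 0]

lemma dualVertex_dotProduct (u w y : Fin 2 → ℝ) : dualVertex u w ⬝ᵥ y = -edgeForm u w y := by
  simp only [dualVertex, edgeForm, det2, dotProduct, Fin.sum_univ_two, Pi.smul_apply, smul_eq_mul,
    Matrix.cons_val_zero, Matrix.cons_val_one]
  ring

variable {p u w : Fin 2 → ℝ}

lemma det2_dualVertex_dualVertex (hpu : det2 p u ≠ 0) (huw : det2 u w ≠ 0) :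
    det2 (dualVertex p u) (dualVertex u w) =
      1 / det2 p u + 1 / det2 u w - det2 p w / (det2 p u * det2 u w) := by
  have h : det2 (dualVertex p u) (dualVertex u w) =
      (det2 p u)⁻¹ * (det2 u w)⁻¹ * (det2 u w + det2 p u - det2 p w) := by
    rw [dualVertex, dualVertex]
    generalize (det2 p u)⁻¹ = a
    generalize (det2 u w)⁻¹ = b
    simp only [det2, Pi.smul_apply, smul_eq_mul, Matrix.cons_val_zero, Matrix.cons_val_one]
    ring
  rw [h]
  field_simp

lemma edgeForm_dualVertex (hpu : det2 p u ≠ 0) (huw : det2 u w ≠ 0)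
    (h : det2 (dualVertex p u) (dualVertex u w) ≠ 0) (y : Fin 2 → ℝ) :
    edgeForm (dualVertex p u) (dualVertex u w) y = -(y ⬝ᵥ u) := by
  conv_rhs => rw [eq_smul_add_smul_of_det2_ne_zero h y]
  rw [add_dotProduct, smul_dotProduct, smul_dotProduct, dualVertex_dotProduct,
    dualVertex_dotProduct, edgeForm_right hpu, edgeForm_left huw, edgeForm, add_div]
  simp only [smul_eq_mul]
  ring

end Dual

section PolarDual

lemma polarDual_convexHull {d : ℕ} (S : Set (Fin d → ℝ)) :
    polarDual (convexHull ℝ S) = {y | ∀ x ∈ S, -1 ≤ y ⬝ᵥ x} := by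
  ext y
  have hlin : IsLinearMap ℝ (y ⬝ᵥ ·) := ⟨dotProduct_add y, fun c x ↦ dotProduct_smul c y x⟩
  exact ⟨fun h x hx ↦ h x (subset_convexHull ℝ S hx),
    fun h ↦ convexHull_min h (convex_halfSpace_ge hlin (-1))⟩

end PolarDual

namespace IsBoundaryCycle

section Polar

variable {X : Finset (Fin 2 → ℝ)} {next : (Fin 2 → ℝ) → Fin 2 → ℝ} {u : Fin 2 → ℝ}

lemma injOn_dualVertex (h : IsBoundaryCycle X next) :
    Set.InjOn (fun u ↦ dualVertex u (next u)) X := fun u hu v hv he ↦ by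
  have hform : edgeForm u (next u) = edgeForm v (next v) := funext fun y ↦ by
    rw [← neg_inj, ← dualVertex_dotProduct, ← dualVertex_dotProduct]
    exact congrArg (· ⬝ᵥ y) he
  by_contra hne
  have hv' : v = next u := by
    by_contra hnext
    refine (h.edgeForm_lt_one hu hv (Ne.symm hne) hnext).ne ?_
    rw [hform, edgeForm_left (h.det2_next_pos hv).ne']
  have hu' : u = next v := by
    by_contra hnext
    refine (h.edgeForm_lt_one hv hu hne hnext).ne ?_
    rw [← hform, edgeForm_left (h.det2_next_pos hu).ne']
  exact h.next_next_ne hu (hv' ▸ hu'.symm)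

lemma det2_dualVertex_next_pos (h : IsBoundaryCycle X next) (hu : u ∈ X) :
    0 < det2 (dualVertex u (next u)) (dualVertex (next u) (next (next u))) := by
  have hw := h.next_mem hu
  have h1 := h.det2_next_pos hu
  have h2 := h.det2_next_pos hw
  have hlt := h.edgeForm_lt_one hu (h.next_mem hw) (h.next_next_ne hu) (h.next_ne hw)
  rw [edgeForm, det2_swap (next u), div_lt_one h1] at hlt
  rw [det2_dualVertex_dualVertex h1.ne' h2.ne', div_add_div _ _ h1.ne' h2.ne', ← sub_div]
  exact div_pos (by linarith) (mul_pos h1 h2)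

lemma edgeForm_dualVertex_next (h : IsBoundaryCycle X next) (hu : u ∈ X) (y : Fin 2 → ℝ) :
    edgeForm (dualVertex u (next u)) (dualVertex (next u) (next (next u))) y =
      -(y ⬝ᵥ next u) :=
  edgeForm_dualVertex (h.det2_next_pos hu).ne' (h.det2_next_pos (h.next_mem hu)).ne'
    (h.det2_dualVertex_next_pos hu).ne' y

theorem exists_isBoundaryCycle_dual [DecidableEq (Fin 2 → ℝ)] (h : IsBoundaryCycle X next) :
    ∃ next', IsBoundaryCycle (X.image fun u ↦ dualVertex u (next u)) next' ∧
      ∀ u ∈ X, next' (dualVertex u (next u)) = dualVertex (next u) (next (next u)) := by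
  set q := fun u ↦ dualVertex u (next u)
  have : Nonempty (Fin 2 → ℝ) := ⟨0⟩
  have hinv : ∀ u ∈ X, Function.invFunOn q X (q u) = u := h.injOn_dualVertex.leftInvOn_invFunOn
  refine ⟨fun y ↦ q (next (Function.invFunOn q X y)), ⟨h.nonempty.image q, ?_, ?_, ?_⟩,
    fun u hu ↦ congrArg (fun v ↦ q (next v)) (hinv u hu)⟩ <;>
    simp only [Finset.forall_mem_image]
  · exact fun u hu ↦ Finset.mem_image_of_mem q (h.next_mem (by rwa [hinv u hu]))
  · exact fun u hu ↦ by simpa only [hinv u hu] using h.det2_dualVertex_next_pos hu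
  · intro u hu v hv hvu hvw
    rw [hinv u hu] at hvw ⊢
    rw [h.edgeForm_dualVertex_next hu, dualVertex_dotProduct, neg_neg]
    exact h.edgeForm_lt_one hv (h.next_mem hu) (fun he ↦ hvw (congrArg q he.symm))
      fun he ↦ hvu (congrArg q (h.injOn_next hu hv he).symm)

lemma mem_polarDual_iff (h : IsBoundaryCycle X next) (hu : u ∈ X) {y : Fin 2 → ℝ}
    (hy : y ∈ halfOpenCone (dualVertex u (next u)) (dualVertex (next u) (next (next u)))) :
    y ∈ polarDual (convexHull ℝ (X : Set (Fin 2 → ℝ))) ↔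
      edgeForm (dualVertex u (next u)) (dualVertex (next u) (next (next u))) y ≤ 1 := by
  have hd := h.det2_dualVertex_next_pos hu
  rw [polarDual_convexHull]
  refine ⟨fun hy ↦ ?_, fun hle x hx ↦ ?_⟩
  · rw [h.edgeForm_dualVertex_next hu, neg_le]
    exact hy _ (h.next_mem hu)
  · rw [edgeForm, add_div] at hle
    rw [eq_smul_add_smul_of_det2_ne_zero hd.ne' y, add_dotProduct, smul_dotProduct,
      smul_dotProduct, dualVertex_dotProduct, dualVertex_dotProduct, smul_eq_mul, smul_eq_mul]
    have h1 := mul_le_of_le_one_right (div_nonneg hy.1.le hd.le) (h.edgeForm_le_one hu hx)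
    have h2 := mul_le_of_le_one_right (div_nonneg hy.2 hd.le)
      (h.edgeForm_le_one (h.next_mem hu) hx)
    linarith

theorem v2_polarDual (h : IsBoundaryCycle X next) :
    v2 (polarDual (convexHull ℝ (X : Set (Fin 2 → ℝ)))) = ∑ u ∈ X, 2 / det2 u (next u) -
      ∑ u ∈ X, det2 u (next (next u)) / (det2 u (next u) * det2 (next u) (next (next u))) := by
  classical
  obtain ⟨next', h', hnext'⟩ := h.exists_isBoundaryCycle_dual
  have h0 : 0 ∈ polarDual (convexHull ℝ (X : Set (Fin 2 → ℝ))) := fun x _ ↦ by simp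
  rw [h'.eq_insert_biUnion_halfOpenTriangle h0 ?_, h'.v2_insert_biUnion,
    Finset.sum_image h.injOn_dualVertex]
  · have hterm : ∀ u ∈ X, det2 (dualVertex u (next u)) (next' (dualVertex u (next u))) =
        1 / det2 u (next u) + 1 / det2 (next u) (next (next u)) -
          det2 u (next (next u)) / (det2 u (next u) * det2 (next u) (next (next u))) :=
      fun u hu ↦ by
        rw [hnext' u hu, det2_dualVertex_dualVertex (h.det2_next_pos hu).ne'
          (h.det2_next_pos (h.next_mem hu)).ne']
    rw [Finset.sum_congr rfl hterm, Finset.sum_sub_distrib, Finset.sum_add_distrib,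
      h.sum_comp_next fun u ↦ 1 / det2 u (next u), ← two_mul, Finset.mul_sum]
    simp only [mul_one_div]
  · simp only [Finset.forall_mem_image]
    intro u hu y hy
    rw [hnext' u hu] at hy ⊢
    exact h.mem_polarDual_iff hu hy

end Polar

end IsBoundaryCycle

lemma IsLatticePolytope.exists_eq_convexHull_extremePoints {d : ℕ} {P : Set (Fin d → ℝ)}
    (hP : IsLatticePolytope P) :
    ∃ X : Finset (Fin d → ℝ), (X : Set (Fin d → ℝ)) = P.extremePoints ℝ ∧
      P = convexHull ℝ (X : Set (Fin d → ℝ)) := by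
  obtain ⟨V, rfl⟩ := hP
  have hV : (coeLat '' (V : Set (Fin d → ℤ))).Finite := V.finite_toSet.image _
  have hX := hV.subset (extremePoints_convexHull_subset (𝕜 := ℝ))
  refine ⟨hX.toFinset, hX.coe_toFinset, ?_⟩
  rw [hX.coe_toFinset, ← (hX.isClosed_convexHull ℝ).closure_eq,
    closure_convexHull_extremePoints (hV.isCompact_convexHull ℝ) (convex_convexHull ℝ _)]

theorem LDP_twelve_gauge (Δ : Set (Fin 2 → ℝ)) (hΔ : IsLDP Δ) :
    v2 Δ + v2 (polarDual Δ) =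
      12 * ∑ᶠ n ∈ latticePoints Δ, (1 - gauge Δ (coeLat n)) ^ 2 := by
  obtain ⟨hpoly, -, h0, hprim⟩ := hΔ
  obtain ⟨X, hX, hhull⟩ := hpoly.exists_eq_convexHull_extremePoints
  rw [← hX] at hprim
  choose! ι hι hgcd using hprim
  rw [hhull] at h0 hX ⊢
  obtain ⟨next, h⟩ := exists_isBoundaryCycle h0 hX.subset
  have hcone := h.twelve_mul_sum_coneSum hι fun u hu ↦ Int.isCoprime_iff_gcd_eq_one.2 (hgcd u hu)
  have hvol : v2 (convexHull ℝ (X : Set (Fin 2 → ℝ))) = ∑ u ∈ X, det2 u (next u) := by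
    rw [h.convexHull_eq h0, h.v2_insert_biUnion]
  rw [hvol, h.v2_polarDual, h.finsum_latticePoints_convexHull h0 hι]
  linarith

end
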